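/- arXiv:1409.3583 — 3 statements merged into one kernel-verified Lean document; each statement's English description precedes it below -/
import Mathlib

section
/- Let t be an integer greater than two, and let G be a finite simple graph that is gap-free and claw-free with I_t(G) ≠ 0. Then the t-path ideal I_t(G) has a linear minimal free resolution, i.e., reg(I_t(G)) = t. -/
open MvPolynomial

/-! Graph-theoretic definitions -/

/-- A list of vertices is a path in `G`: consecutive vertices are adjacent and all
vertices are distinct. -/
def SimpleGraph.IsPathList {V : Type*} (G : SimpleGraph V) (l : List V) : Prop :=
  l.Chain' G.Adj ∧ l.Nodup

/-- The `t`-path ideal of a graph: the ideal generated by the monomials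
`x_{v_1} ⋯ x_{v_t}` where `v_1 ⋯ v_t` is a path on `t` distinct vertices of `G`. -/
noncomputable def pathIdeal {V K : Type*} [CommRing K] (G : SimpleGraph V) (t : ℕ) :
    Ideal (MvPolynomial V K) :=
  Ideal.span { p | ∃ l : List V, G.IsPathList l ∧ l.length = t ∧ p = (l.map X).prod }

/-- The edge ideal of a graph. -/
noncomputable def edgeIdeal {V K : Type*} [CommRing K] (G : SimpleGraph V) :
    Ideal (MvPolynomial V K) :=
  Ideal.span { p | ∃ u v, G.Adj u v ∧ p = X u * X v }

/-- `G` is gap-free: any two vertex-disjoint edges are joined by an edge. -/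
def SimpleGraph.GapFree {V : Type*} (G : SimpleGraph V) : Prop :=
  ∀ a b c d : V, G.Adj a b → G.Adj c d → a ≠ c → a ≠ d → b ≠ c → b ≠ d →
    (G.Adj a c ∨ G.Adj a d ∨ G.Adj b c ∨ G.Adj b d)

/-- `G` is claw-free: it has no induced `K_{1,3}`. -/
def SimpleGraph.ClawFree {V : Type*} (G : SimpleGraph V) : Prop :=
  ∀ v a b c : V, G.Adj v a → G.Adj v b → G.Adj v c → a ≠ b → a ≠ c → b ≠ c →
    (G.Adj a b ∨ G.Adj a c ∨ G.Adj b c)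

/-- `G` is cricket-free: it has no induced cricket. -/
def SimpleGraph.CricketFree {V : Type*} (G : SimpleGraph V) : Prop :=
  ¬ ∃ w1 w2 w3 w4 w5 : V,
      w1 ≠ w2 ∧ w1 ≠ w3 ∧ w1 ≠ w4 ∧ w1 ≠ w5 ∧ w2 ≠ w3 ∧ w2 ≠ w4 ∧ w2 ≠ w5 ∧
      w3 ≠ w4 ∧ w3 ≠ w5 ∧ w4 ≠ w5 ∧
      G.Adj w1 w3 ∧ G.Adj w2 w3 ∧ G.Adj w3 w4 ∧ G.Adj w3 w5 ∧ G.Adj w4 w5 ∧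
      ¬ G.Adj w1 w2 ∧ ¬ G.Adj w1 w4 ∧ ¬ G.Adj w1 w5 ∧ ¬ G.Adj w2 w4 ∧ ¬ G.Adj w2 w5

/-- `w : Fin n → V` is an induced cycle of length `n` in `H`. -/
def SimpleGraph.IsInducedCycle {V : Type*} (H : SimpleGraph V) {n : ℕ} (w : Fin n → V) :
    Prop :=
  3 ≤ n ∧ Function.Injective w ∧
    ∀ i j : Fin n, H.Adj (w i) (w j) ↔
      ((j : ℕ) = ((i : ℕ) + 1) % n ∨ (i : ℕ) = ((j : ℕ) + 1) % n)

/-- A graph is chordal if it has no induced cycle of length at least four. -/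
def SimpleGraph.Chordal {V : Type*} (H : SimpleGraph V) : Prop :=
  ∀ (n : ℕ), 4 ≤ n → ∀ w : Fin n → V, ¬ H.IsInducedCycle w

/-! Monomial ideals, graded Betti numbers via the Taylor complex, and
Castelnuovo–Mumford regularity. -/

/-- The monomial ideal generated by the monomials with exponent vectors `gens`. -/
noncomputable def monomialSpan {V K : Type*} [CommRing K] {k : ℕ}
    (gens : Fin k → (V →₀ ℕ)) : Ideal (MvPolynomial V K) :=
  Ideal.span (Set.range fun i => monomial (gens i) (1 : K))

/-- The total degree of an exponent vector. -/
def monomialDegree {V : Type*} (m : V →₀ ℕ) : ℕ := m.sum fun _ n => n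

/-- `m` is a minimal monomial generator of the monomial ideal `I`. -/
def IsMinimalMonomialGen {V K : Type*} [CommRing K] (I : Ideal (MvPolynomial V K))
    (m : V →₀ ℕ) : Prop :=
  monomial m (1 : K) ∈ I ∧ ∀ m' : V →₀ ℕ, m' ≤ m → m' ≠ m → monomial m' (1 : K) ∉ I

/-- The lcm of the monomials `gens i`, `i ∈ T`. -/
noncomputable def taylorLcm {V : Type*} {k : ℕ} (gens : Fin k → (V →₀ ℕ))
    (T : Finset (Fin k)) : V →₀ ℕ :=
  T.sup gens

open Classical in
/-- The boundary of a basis element of the Taylor complex of `gens`, tensored with the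
residue field `K`: only the terms where the lcm is unchanged survive. -/
noncomputable def taylorBoundary {V K : Type*} [Field K] {k : ℕ}
    (gens : Fin k → (V →₀ ℕ)) (T : Finset (Fin k)) : Finset (Fin k) →₀ K :=
  ∑ t ∈ T, if taylorLcm gens (T.erase t) = taylorLcm gens T then
      ((-1 : K) ^ (T.filter fun s => s < t).card) • Finsupp.single (T.erase t) (1 : K)
    else 0

/-- The differential of the Taylor complex of `gens` tensored with `K`. -/
noncomputable def taylorDiff {V K : Type*} [Field K] {k : ℕ}
    (gens : Fin k → (V →₀ ℕ)) : (Finset (Fin k) →₀ K) →ₗ[K] (Finset (Fin k) →₀ K) :=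
  Finsupp.lsum K fun T =>
    LinearMap.toSpanSingleton K (Finset (Fin k) →₀ K) (taylorBoundary gens T)

/-- The graded piece of the Taylor complex in homological degree `i` and internal
degree `j`. -/
noncomputable def taylorPiece {V K : Type*} [Field K] {k : ℕ}
    (gens : Fin k → (V →₀ ℕ)) (i j : ℕ) : Submodule K (Finset (Fin k) →₀ K) :=
  Submodule.span K { f | ∃ T : Finset (Fin k), T.card = i ∧
    monomialDegree (taylorLcm gens T) = j ∧ f = Finsupp.single T (1 : K) }

/-- Nonvanishing of the degree-`j` part of the `i`-th homology of the Taylor complex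
of `gens` tensored with `K`; since the Taylor complex is a graded free resolution of
`S/I` (where `I` is the ideal generated by the monomials `gens`), this says exactly
that `Tor_i^S(S/I, K)_j ≠ 0`. -/
noncomputable def taylorHomologyNonzero {V K : Type*} [Field K] {k : ℕ}
    (gens : Fin k → (V →₀ ℕ)) (i j : ℕ) : Prop :=
  ¬ (LinearMap.ker (taylorDiff (K := K) gens) ⊓ taylorPiece (K := K) gens i j ≤
      Submodule.map (taylorDiff (K := K) gens) (taylorPiece (K := K) gens (i + 1) j))

/-- For a monomial ideal `I`, `Tor_i^S(I, K)_j ≠ 0`.  (Since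
`Tor_i^S(I,K) ≅ Tor_{i+1}^S(S/I,K)`, this is computed from the Taylor complex on any
family of monomial generators of `I`.) -/
def IdealTorNonzero {V K : Type*} [Field K] (I : Ideal (MvPolynomial V K))
    (i j : ℕ) : Prop :=
  ∃ (k : ℕ) (gens : Fin k → (V →₀ ℕ)), I = monomialSpan gens ∧
    taylorHomologyNonzero (K := K) gens (i + 1) j

/-- The Castelnuovo–Mumford regularity of a monomial ideal `I`:
`reg I = max { j - i : Tor_i^S(I, K)_j ≠ 0 }`. -/
noncomputable def reg {V K : Type*} [Field K] (I : Ideal (MvPolynomial V K)) : ℕ :=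
  sSup { d | ∃ i j : ℕ, IdealTorNonzero I i j ∧ d = j - i }


section GraphPart
variable {V : Type*} {G : SimpleGraph V}

/-- no Hamiltonian path on `y :: l` -/
def NoTr (G : SimpleGraph V) (l : List V) (y : V) : Prop :=
  ∀ l' : List V, l'.Perm (y :: l) → ¬ l'.IsChain G.Adj

lemma chain_rev {l : List V} (h : l.IsChain G.Adj) : l.reverse.IsChain G.Adj := by
  rw [List.isChain_reverse]
  exact h.imp (fun a b hab => hab.symm)

lemma chain_rot {p x : V} {s r : List V} (h1 : (p :: s).IsChain G.Adj)
    (h2 : (x :: r).IsChain G.Adj) (h : G.Adj p x) :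
    ((p :: s).reverse ++ x :: r).IsChain G.Adj := by
  have e : (p :: s).reverse ++ x :: r = s.reverse ++ p :: x :: r := by simp
  rw [e, List.isChain_append_cons_cons]
  refine ⟨?_, h, h2⟩
  have := chain_rev h1
  simpa using this

lemma NoTr.perm {l m : List V} {y : V} (h : NoTr G l y) (hp : m.Perm l) : NoTr G m y :=
  fun l' hl' => h l' (hl'.trans (hp.cons y))

lemma NoTr.head {l : List V} {y p : V} (h : NoTr G (p :: l) y) (hc : (p :: l).IsChain G.Adj) :
    ¬ G.Adj y p := by
  intro hy
  exact h (y :: p :: l) (List.Perm.refl _) (List.isChain_cons_cons.2 ⟨hy, hc⟩)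

lemma NoTr.last {l : List V} {y p : V} (h : NoTr G (l ++ [p]) y)
    (hc : (l ++ [p]).IsChain G.Adj) : ¬ G.Adj y p := by
  intro hy
  have hp : (p :: l.reverse).Perm (l ++ [p]) := by
    have : p :: l.reverse = (l ++ [p]).reverse := by simp
    rw [this]; exact List.reverse_perm _
  refine (h.perm hp).head ?_ hy
  have : p :: l.reverse = (l ++ [p]).reverse := by simp
  rw [this]; exact chain_rev hc

lemma NoTr.mid {a b : List V} {y u w : V} (h : NoTr G (a ++ u :: w :: b) y)
    (hc : (a ++ u :: w :: b).IsChain G.Adj) (h1 : G.Adj y u) (h2 : G.Adj y w) : False := by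
  refine h (a ++ u :: y :: w :: b) ?_ ?_
  · have : (y :: (a ++ u :: w :: b)).Perm (a ++ u :: y :: w :: b) := by
      have := (List.perm_middle (a := y) (l₁ := a ++ [u]) (l₂ := w :: b)).symm
      simpa using this
    exact this.symm
  · rw [List.isChain_append_cons_cons] at hc ⊢
    exact ⟨hc.1, h1.symm, List.isChain_cons_cons.2 ⟨h2, hc.2.2⟩⟩

/-- `p` is head, `c` a neighbor of `y`: not adjacent. -/
lemma NoTr.head_nbr (hclaw : G.ClawFree) {l : List V} {y p c : V} (h : NoTr G (p :: l) y)
    (hc : (p :: l).IsChain G.Adj) (hn : (y :: p :: l).Nodup) (hcl : c ∈ p :: l)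
    (hyc : G.Adj y c) : ¬ G.Adj p c := by
  intro hpc
  rcases List.mem_cons.1 hcl with rfl | hcl
  · exact G.loopless.irrefl _ hpc
  obtain ⟨a, b, rfl⟩ := List.mem_iff_append.1 hcl
  rcases b with _ | ⟨w, b⟩
  · have h' : NoTr G ((p :: a) ++ [c]) y := by simpa using h
    exact h'.last (by simpa using hc) hyc
  have h' : NoTr G ((p :: a) ++ c :: w :: b) y := by simpa using h
  have hc' : ((p :: a) ++ c :: w :: b).IsChain G.Adj := by simpa using hc
  have hyw : ¬ G.Adj y w := fun hyw => h'.mid hc' hyc hyw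
  have hyp := h.head hc
  have hcw : G.Adj c w := (List.isChain_append_cons_cons.1 hc').2.1
  have hpw : G.Adj p w := by
    have := hclaw c y p w hyc.symm hpc.symm hcw (by rintro rfl; simp at hn)
      (by rintro rfl; simp at hn) (by rintro rfl; simp at hn)
    tauto
  have h1 := (List.isChain_append_cons_cons.1 hc').1
  have h2 := (List.isChain_append_cons_cons.1 hc').2.2
  refine h' (y :: (((p :: a) ++ [c]).reverse ++ w :: b)) ?_ ?_
  · refine List.Perm.cons y ?_
    have e : (p :: a) ++ c :: w :: b = ((p :: a) ++ [c]) ++ w :: b := by simp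
    rw [e]
    exact (List.reverse_perm _).append_right _
  · have e1 : y :: (((p :: a) ++ [c]).reverse ++ w :: b) =
        y :: c :: ((p :: a).reverse ++ w :: b) := by simp
    have h3 : ((p :: (a ++ [c])).reverse ++ w :: b).IsChain G.Adj :=
      chain_rot (by simpa using h1) h2 hpw
    have e2 : (p :: (a ++ [c])).reverse ++ w :: b = c :: ((p :: a).reverse ++ w :: b) := by simp
    rw [e2] at h3
    rw [e1]
    exact List.isChain_cons_cons.2 ⟨hyc, h3⟩

/-- structure of the end -/
lemma NoTr.second (hgap : G.GapFree) (hclaw : G.ClawFree) {l : List V} {y p q c : V}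
    (h : NoTr G (p :: q :: l) y)
    (hc : (p :: q :: l).IsChain G.Adj) (hn : (y :: p :: q :: l).Nodup) (hcl : c ∈ p :: q :: l)
    (hyc : G.Adj y c) : G.Adj q c ∧ ¬ G.Adj y q := by
  have hpq : G.Adj p q := (List.isChain_cons_cons.1 hc).1
  have hyq : ¬ G.Adj y q := fun hyq =>
    h.head_nbr hclaw hc hn (c := q) (by simp) hyq hpq
  have hyp := h.head hc
  have hpc := h.head_nbr hclaw hc hn hcl hyc
  refine ⟨?_, hyq⟩
  have hqc : q ≠ c := by rintro rfl; exact hyq hyc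
  have hpc' : p ≠ c := by rintro rfl; exact hyp hyc
  have := hgap p q y c hpq hyc (by rintro rfl; simp at hn) hpc'
    (by rintro rfl; simp at hn) hqc
  have s1 := G.adj_comm p y
  have s2 := G.adj_comm q y
  tauto

lemma rot_perm (s r : List V) : (s.reverse ++ r).Perm (s ++ r) :=
  (List.reverse_perm s).append_right r

lemma NoTr.leaf_aux (hgap : G.GapFree) (hclaw : G.ClawFree) {y p q c : V} (s : List V) :
    ∀ (x : V) (r : List V), NoTr G (p :: q :: (s ++ x :: r)) y →
    (p :: q :: (s ++ x :: r)).IsChain G.Adj → (y :: p :: q :: (s ++ x :: r)).Nodup →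
    c ∈ p :: q :: (s ++ x :: r) → G.Adj y c → ¬ G.Adj p x := by
  induction s using List.reverseRecOn with
  | nil =>
    intro x r h hc hn hcl hyc hpx
    simp only [List.nil_append] at *
    have hqc := h.second hgap hclaw hc hn hcl hyc
    have hpq : G.Adj p q := (List.isChain_cons_cons.1 hc).1
    have hp : (q :: p :: x :: r).Perm (p :: q :: x :: r) := List.Perm.swap _ _ _
    refine (h.perm hp).head_nbr hclaw ?_ ?_ (hp.mem_iff.2 hcl) hyc hqc.1
    · simp only [List.isChain_cons_cons] at hc ⊢
      exact ⟨hpq.symm, hpx, hc.2.2⟩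
    · exact ((hp.cons y).nodup_iff).2 hn
  | append_singleton s u ih =>
    intro x r h hc hn hcl hyc hpx
    have e : p :: q :: ((s ++ [u]) ++ x :: r) = (p :: q :: (s ++ [u])) ++ x :: r := by simp
    have e1 : p :: q :: ((s ++ [u]) ++ x :: r) = p :: q :: (s ++ u :: (x :: r)) := by simp
    have hpu : ¬ G.Adj p u := by
      rw [e1] at h hc hn hcl
      exact ih u (x :: r) h hc hn hcl hyc
    have hperm : ((p :: q :: (s ++ [u])).reverse ++ x :: r).Perm
        (p :: q :: ((s ++ [u]) ++ x :: r)) := by rw [e]; exact rot_perm _ _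
    have hpc := h.head_nbr hclaw hc hn hcl hyc
    have hxc : x ≠ c := by rintro rfl; exact hpc hpx
    have hch : ((p :: q :: (s ++ [u])).reverse ++ x :: r).IsChain G.Adj := by
      rw [e, List.isChain_append] at hc
      exact chain_rot hc.1 hc.2.1 hpx
    have e2 : (p :: q :: (s ++ [u])).reverse ++ x :: r =
        u :: ((p :: q :: s).reverse ++ x :: r) := by simp
    rw [e2] at hperm hch
    have hN := h.perm hperm
    have huc : ¬ G.Adj u c := hN.head_nbr hclaw hch (((hperm.cons y).nodup_iff).2 hn)
      (hperm.mem_iff.2 hcl) hyc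
    have hyu : ¬ G.Adj y u := hN.head hch
    have hyx : ¬ G.Adj y x := fun hyx => h.head_nbr hclaw hc hn (c := x) (by simp) hyx hpx
    have hyp := h.head hc
    have hux : G.Adj u x := by
      have := hc
      rw [e1] at this
      have e3 : p :: q :: (s ++ u :: x :: r) = (p :: q :: s) ++ u :: x :: r := by simp
      rw [e3] at this
      exact (List.isChain_append_cons_cons.1 this).2.1
    have hpc' : p ≠ c := by rintro rfl; exact hyp hyc
    have huc' : u ≠ c := by rintro rfl; exact hyu hyc
    have hxc2 : G.Adj x c := by
      have := hgap p x y c hpx hyc (by rintro rfl; simp at hn) hpc'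
        (by rintro rfl; simp at hn) hxc
      have s1 := G.adj_comm p y
      have s2 := G.adj_comm x y
      tauto
    have hpu' : p ≠ u := by
      rintro rfl
      simp at hn
    have := hclaw x p u c hpx.symm hux.symm hxc2 hpu' hpc' huc'
    tauto

/-- the head is a leaf of `y :: l`. -/
lemma NoTr.leaf (hgap : G.GapFree) (hclaw : G.ClawFree) {l : List V} {y p q c x : V}
    (h : NoTr G (p :: q :: l) y)
    (hc : (p :: q :: l).IsChain G.Adj) (hn : (y :: p :: q :: l).Nodup) (hcl : c ∈ p :: q :: l)
    (hyc : G.Adj y c) (hx : x ∈ y :: p :: q :: l) (hpx : G.Adj p x) : x = q := by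
  rcases List.mem_cons.1 hx with rfl | hx
  · exact absurd hpx.symm (h.head hc)
  rcases List.mem_cons.1 hx with rfl | hx
  · exact absurd hpx (G.loopless.irrefl _)
  rcases List.mem_cons.1 hx with rfl | hx
  · rfl
  obtain ⟨s, r, rfl⟩ := List.mem_iff_append.1 hx
  exact absurd hpx (NoTr.leaf_aux hgap hclaw s x r h hc hn hcl hyc)

lemma NoTr.len (hclaw : G.ClawFree) {l : List V} {y c : V} (h : NoTr G l y)
    (hc : l.IsChain G.Adj) (hcl : c ∈ l) (hyc : G.Adj y c) :
    ∃ p q l', l = p :: q :: l' := by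
  rcases l with _ | ⟨p, _ | ⟨q, l⟩⟩
  · simp at hcl
  · simp at hcl
    subst hcl
    exact absurd hyc (h.head hc)
  · exact ⟨p, q, l, rfl⟩

lemma NoTr.pt_aux (hgap : G.GapFree) (hclaw : G.ClawFree) {a s b : List V} {y c d : V}
    (h : NoTr G (a ++ c :: (s ++ d :: b)) y)
    (hc : (a ++ c :: (s ++ d :: b)).IsChain G.Adj)
    (hn : (y :: (a ++ c :: (s ++ d :: b))).Nodup)
    (hyc : G.Adj y c) (hyd : G.Adj y d) : False := by
  obtain ⟨p, q, l', hl⟩ := h.len hclaw hc (c := c) (by simp) hyc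
  have hcm : c ∈ p :: q :: l' := by rw [← hl]; simp
  have hdm : d ∈ p :: q :: l' := by rw [← hl]; simp
  have hN := h; have hC := hc; have hD := hn
  rw [hl] at hN hC hD
  have hqc := hN.second hgap hclaw hC hD hcm hyc
  have hqd := hN.second hgap hclaw hC hD hdm hyd
  have hyp := hN.head hC
  have hpq : G.Adj p q := (List.isChain_cons_cons.1 hC).1
  rcases s with _ | ⟨e, s⟩
  · exact h.mid hc hyc hyd
  rcases b with _ | ⟨f, b⟩
  · have e1 : a ++ c :: ((e :: s) ++ [d]) = (a ++ c :: e :: s) ++ [d] := by simp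
    rw [e1] at h hc
    exact h.last hc hyd
  have hye : ¬ G.Adj y e := fun hye => h.mid hc hyc hye
  have e2 : a ++ c :: ((e :: s) ++ d :: f :: b) = (a ++ c :: e :: s) ++ d :: f :: b := by simp
  have h2 := h; have hc2 := hc
  rw [e2] at h2 hc2
  have hyf : ¬ G.Adj y f := fun hyf => h2.mid hc2 hyd hyf
  have hce : G.Adj c e := (List.isChain_append_cons_cons.1 hc).2.1
  have hdf : G.Adj d f := (List.isChain_append_cons_cons.1 hc2).2.1
  have hcp : c ≠ p := by rintro rfl; exact hyp hyc
  have hcq : c ≠ q := by rintro rfl; exact hqc.2 hyc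
  have hep : (e ≠ p ∧ e ≠ q ∧ f ≠ p ∧ f ≠ q ∧ e ≠ f) ∧ (y ≠ e ∧ y ≠ f ∧ y ≠ q) := by
    clear hclaw hgap hN hC hD h hc h2 hc2
    rcases a with _ | ⟨a1, _ | ⟨a2, a⟩⟩
    · simp at hl; exact absurd hl.1 hcp
    · simp at hl; exact absurd hl.2.1 hcq
    · simp at hl
      obtain ⟨rfl, rfl, -⟩ := hl
      simp [List.nodup_append] at hn
      grind
  obtain ⟨hep, hne⟩ := hep
  have heq : G.Adj e q := by
    have := hclaw c y e q hyc.symm hce hqc.1.symm hne.1 hne.2.2 hep.2.1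
    tauto
  have hfq : G.Adj f q := by
    have := hclaw d y f q hyd.symm hdf hqd.1.symm hne.2.1 hne.2.2 hep.2.2.2.1
    tauto
  have hem : e ∈ y :: p :: q :: l' := by rw [← hl]; simp
  have hfm : f ∈ y :: p :: q :: l' := by rw [← hl]; simp
  have hpe : ¬ G.Adj p e := fun hh => hep.2.1 (hN.leaf hgap hclaw hC hD hcm hyc hem hh)
  have hpf : ¬ G.Adj p f := fun hh => hep.2.2.2.1 (hN.leaf hgap hclaw hC hD hcm hyc hfm hh)
  have hef : G.Adj e f := by
    have := hclaw q p e f hpq.symm heq.symm hfq.symm hep.1.symm hep.2.2.1.symm hep.2.2.2.2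
    tauto
  have hc3 := (List.isChain_append_cons_cons.1 hc).1
  have hc4 := (List.isChain_append_cons_cons.1 hc).2.2
  have e5 : e :: (s ++ d :: f :: b) = (e :: s) ++ d :: f :: b := by simp
  have hc5 := List.isChain_append_cons_cons.1 (e5 ▸ hc4)
  refine h (a ++ c :: y :: (((e :: s) ++ [d]).reverse ++ f :: b)) ?_ ?_
  · have p1 : (((e :: s) ++ [d]).reverse ++ f :: b).Perm ((e :: s) ++ d :: f :: b) := by
      have := rot_perm ((e :: s) ++ [d]) (f :: b)
      simpa using this
    refine (((p1.cons y).cons c).append_left a).trans ?_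
    have := (List.perm_middle (a := y) (l₁ := a ++ [c]) (l₂ := (e :: s) ++ d :: f :: b))
    simpa using this
  · rw [List.isChain_append_cons_cons]
    refine ⟨hc3, hyc.symm, ?_⟩
    have h3 : ((e :: (s ++ [d])).reverse ++ f :: b).IsChain G.Adj :=
      chain_rot (by simpa using hc5.1) hc5.2.2 hef
    have e6 : (e :: (s ++ [d])).reverse ++ f :: b = d :: ((e :: s).reverse ++ f :: b) := by simp
    have e7 : y :: (((e :: s) ++ [d]).reverse ++ f :: b) =
      y :: d :: ((e :: s).reverse ++ f :: b) := by simp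
    rw [e6] at h3
    rw [e7]
    exact List.isChain_cons_cons.2 ⟨hyd, h3⟩

/-- `y` is a leaf. -/
lemma NoTr.pt (hgap : G.GapFree) (hclaw : G.ClawFree) {l : List V} {y c d : V}
    (h : NoTr G l y) (hc : l.IsChain G.Adj) (hn : (y :: l).Nodup)
    (hcl : c ∈ l) (hyc : G.Adj y c) (hdl : d ∈ l) (hyd : G.Adj y d) : c = d := by
  by_contra hcd
  obtain ⟨a, b, rfl⟩ := List.mem_iff_append.1 hcl
  simp only [List.mem_append, List.mem_cons] at hdl
  rcases hdl with hd | hd | hd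
  · obtain ⟨a1, a2, rfl⟩ := List.mem_iff_append.1 hd
    have e : (a1 ++ d :: a2) ++ c :: b = a1 ++ d :: (a2 ++ c :: b) := by simp
    rw [e] at h hc hn
    exact h.pt_aux hgap hclaw hc hn hyd hyc
  · exact hcd hd.symm
  · obtain ⟨a1, a2, rfl⟩ := List.mem_iff_append.1 hd
    exact h.pt_aux hgap hclaw hc hn hyc hyd

end GraphPart

section GraphPart2
variable {V : Type*} {G : SimpleGraph V}

lemma chain_nbr {R : List V} (h : R.IsChain G.Adj) {y : V} (hy : y ∈ R) (hl : 2 ≤ R.length) :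
    ∃ c ∈ R, G.Adj y c := by
  obtain ⟨a, b, rfl⟩ := List.mem_iff_append.1 hy
  rcases b with _ | ⟨w, b⟩
  · rcases List.eq_nil_or_concat a with rfl | ⟨a, w, rfl⟩
    · simp at hl
    · refine ⟨w, by simp, ?_⟩
      have e : (a ++ [w]) ++ [y] = a ++ w :: y :: [] := by simp
      simp only [List.concat_eq_append] at h
      rw [e] at h
      exact (List.isChain_append_cons_cons.1 h).2.1.symm
  · exact ⟨w, by simp, (List.isChain_append_cons_cons.1 h).2.1⟩

/-- at most one neighbour in `R` -/
def LeafIn (G : SimpleGraph V) (R : List V) (x : V) : Prop :=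
  x ∈ R ∧ ∀ a ∈ R, ∀ b ∈ R, G.Adj x a → G.Adj x b → a = b

lemma LeafIn.ends {R : List V} (h : R.IsChain G.Adj) (hn : R.Nodup) {x : V}
    (hx : LeafIn G R x) : (∃ r, R = x :: r) ∨ (∃ r, R = r ++ [x]) := by
  obtain ⟨hx, hu⟩ := hx
  obtain ⟨a, b, rfl⟩ := List.mem_iff_append.1 hx
  rcases b with _ | ⟨w, b⟩
  · exact Or.inr ⟨a, rfl⟩
  · rcases List.eq_nil_or_concat a with rfl | ⟨a, u, rfl⟩
    · exact Or.inl ⟨w :: b, by simp⟩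
    · exfalso
      simp only [List.concat_eq_append] at *
      have h1 := (List.isChain_append_cons_cons.1 h).2.1
      have e : (a ++ [u]) ++ x :: w :: b = a ++ u :: x :: (w :: b) := by simp
      rw [e] at h
      have h2 := (List.isChain_append_cons_cons.1 h).2.1.symm
      have := hu u (by simp) w (by simp) h2 h1
      subst this
      simp [List.nodup_append] at hn

lemma three_leaves {R : List V} (h : R.IsChain G.Adj) (hn : R.Nodup) {x y z : V}
    (hx : LeafIn G R x) (hy : LeafIn G R y) (hz : LeafIn G R z)
    (hxy : x ≠ y) (hxz : x ≠ z) (hyz : y ≠ z) : False := by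
  have key : ∀ a b : V, (∃ r, R = a :: r) → (∃ r, R = b :: r) → a = b := by
    rintro a b ⟨r, rfl⟩ ⟨r', hr⟩
    simp at hr; exact hr.1
  have key2 : ∀ a b : V, (∃ r, R = r ++ [a]) → (∃ r, R = r ++ [b]) → a = b := by
    rintro a b ⟨r, rfl⟩ ⟨r', hr⟩
    exact (List.append_inj' hr rfl).2 |> List.cons_eq_cons.1 |>.1
  rcases hx.ends h hn with h1 | h1 <;> rcases hy.ends h hn with h2 | h2 <;>
    rcases hz.ends h hn with h3 | h3
  · exact hxy (key _ _ h1 h2)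
  · exact hxy (key _ _ h1 h2)
  · exact hxz (key _ _ h1 h3)
  · exact hyz (key2 _ _ h2 h3)
  · exact hyz (key _ _ h2 h3)
  · exact hxz (key2 _ _ h1 h3)
  · exact hxy (key2 _ _ h1 h2)
  · exact hxy (key2 _ _ h1 h2)

lemma NoTr.not_ends {R : List V} {v x : V} (h : NoTr G R v) (hc : R.IsChain G.Adj)
    (hn : R.Nodup) (hx : LeafIn G R x) : ¬ G.Adj v x := by
  rcases hx.ends hc hn with ⟨r, rfl⟩ | ⟨r, rfl⟩
  · exact h.head hc
  · exact h.last hc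

lemma NoTr.rev {l : List V} {y : V} (h : NoTr G l y) : NoTr G l.reverse y :=
  h.perm (List.reverse_perm _)

lemma star_aux (hgap : G.GapFree) (hclaw : G.ClawFree) {z v y : V} {P' R Q : List V}
    (hP : (z :: P').IsChain G.Adj) (hn : (v :: y :: z :: P').Nodup)
    (hy : NoTr G (z :: P') y) (hR : R.IsChain G.Adj) (hRp : R.Perm (y :: P'))
    (hv : NoTr G R v) (hQ : Q.IsChain G.Adj) (hQp : Q.Perm (v :: z :: P'))
    (hlen : 2 ≤ (z :: P').length) : False := by
  have hRn : R.Nodup := by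
    rw [hRp.nodup_iff]; simp at hn ⊢; tauto
  have hvRn : (v :: R).Nodup := by
    rw [(hRp.cons v).nodup_iff]; simp at hn ⊢; tauto
  have hQn : Q.Nodup := by
    rw [hQp.nodup_iff]; simp at hn ⊢; tauto
  have hyPn : (y :: z :: P').Nodup := (List.nodup_cons.1 hn).2
  have hvy : v ≠ y := by rintro rfl; simp at hn
  have hvz : v ≠ z := by rintro rfl; simp at hn
  have hyz : y ≠ z := by rintro rfl; simp at hn
  have hyR : y ∈ R := hRp.mem_iff.2 (by simp)
  obtain ⟨c, hcR, hyc⟩ := chain_nbr hR hyR (by rw [hRp.length_eq]; simpa using hlen)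
  have hcP' : c ∈ P' := by
    rcases List.mem_cons.1 (hRp.mem_iff.1 hcR) with rfl | h
    · exact absurd hyc (G.loopless.irrefl _)
    · exact h
  have hcP : c ∈ z :: P' := List.mem_cons_of_mem _ hcP'
  obtain ⟨p, p2, l', hl⟩ := hy.len hclaw hP hcP hyc
  have hpz : z = p := by simp at hl; exact hl.1
  subst hpz
  have hl' : P' = p2 :: l' := by simpa using hl
  subst hl'
  have hrc : (z :: p2 :: l').reverse.IsChain G.Adj := chain_rev hP
  have hcr : c ∈ (z :: p2 :: l').reverse := List.mem_reverse.2 hcP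
  obtain ⟨q1, q2, m, hm⟩ := hy.rev.len hclaw hrc hcr hyc
  have hyr := hy.rev
  have hrn : (y :: (z :: p2 :: l').reverse).Nodup :=
    (((List.reverse_perm _).cons y).nodup_iff).2 hyPn
  rw [hm] at hrc hcr hyr hrn
  have hmem : ∀ x, x ∈ q1 :: q2 :: m ↔ x ∈ z :: p2 :: l' := by
    intro x; rw [← hm]; simp only [List.mem_reverse]
  have hzq1 : z ≠ q1 := by
    rintro rfl
    have h1 : (z :: p2 :: l').reverse.getLast? = some z := by simp
    rw [hm] at h1
    have h2 : z ∈ q2 :: m := by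
      have := List.mem_of_getLast? (l := q2 :: m) (a := z) (by simpa using h1)
      exact this
    simp at hrn h2
    tauto
  have hzc : ¬ G.Adj z c := hy.head_nbr hclaw hP hyPn hcP hyc
  have hq1c : ¬ G.Adj q1 c := hyr.head_nbr hclaw hrc hrn hcr hyc
  have hp2c := hy.second hgap hclaw hP hyPn hcP hyc
  have hq2c := hyr.second hgap hclaw hrc hrn hcr hyc
  have hyz' := hy.head hP
  have hyq1 := hyr.head hrc
  have hleafz : ∀ x ∈ y :: z :: p2 :: l', G.Adj z x → x = p2 := fun x hx hzx =>
    hy.leaf hgap hclaw hP hyPn hcP hyc hx hzx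
  have hleafq : ∀ x ∈ y :: z :: p2 :: l', G.Adj q1 x → x = q2 := fun x hx hzx => by
    refine hyr.leaf hgap hclaw hrc hrn hcr hyc ?_ hzx
    rcases List.mem_cons.1 hx with h | h
    · simp [h]
    · exact List.mem_cons_of_mem _ ((hmem x).2 h)
  have hq1P : q1 ∈ z :: p2 :: l' := (hmem q1).1 (by simp)
  have hq2P : q2 ∈ z :: p2 :: l' := (hmem q2).1 (by simp)
  have hsub : ∀ x ∈ R, x ∈ y :: z :: p2 :: l' := by
    intro x hx
    rcases List.mem_cons.1 (hRp.mem_iff.1 hx) with h | h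
    · rw [h]; exact List.mem_cons_self
    · exact List.mem_cons_of_mem _ (List.mem_cons_of_mem _ h)
  have hq1R : q1 ∈ R := by
    rw [hRp.mem_iff]
    rcases List.mem_cons.1 hq1P with h | h
    · exact absurd h.symm hzq1
    · exact List.mem_cons_of_mem _ h
  have hzp2 : G.Adj z p2 := (List.isChain_cons_cons.1 hP).1
  have hq12 : G.Adj q1 q2 := (List.isChain_cons_cons.1 hrc).1
  have hzq2 : z ≠ q2 := by rintro rfl; exact hzc hq2c.1
  have hq2R : q2 ∈ R := by
    rw [hRp.mem_iff]
    rcases List.mem_cons.1 hq2P with h | h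
    · exact absurd h.symm hzq2
    · exact List.mem_cons_of_mem _ h
  have hnzq1 : ¬ G.Adj z q1 := fun h => by
    have := hleafz q1 (List.mem_cons_of_mem _ hq1P) h
    subst this
    exact hq1c hp2c.1
  have hp2q2 : p2 ≠ q2 := by
    rintro rfl
    have hcz : z ≠ c := by rintro rfl; exact hyz' hyc
    have hcq : q1 ≠ c := by rintro rfl; exact hyq1 hyc
    have := hclaw p2 z q1 c hzp2.symm hq12.symm hp2c.1 hzq1 hcz hcq
    tauto
  have hnzq2 : ¬ G.Adj z q2 := fun h =>
    hp2q2 (hleafz q2 (List.mem_cons_of_mem _ hq2P) h).symm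
  have hLy : LeafIn G R y := by
    refine ⟨hyR, fun a ha b hb hya hyb => ?_⟩
    have hne : ∀ a ∈ R, G.Adj y a → a ∈ z :: p2 :: l' := by
      intro a ha hya
      rcases List.mem_cons.1 (hsub a ha) with rfl | h
      · exact absurd hya (G.loopless.irrefl _)
      · exact h
    exact hy.pt hgap hclaw hP hyPn (hne a ha hya) hya (hne b hb hyb) hyb
  have hLq : LeafIn G R q1 := by
    refine ⟨hq1R, fun a ha b hb hya hyb => ?_⟩
    rw [hleafq a (hsub a ha) hya, hleafq b (hsub b hb) hyb]
  have hvy' := hv.not_ends hR hRn hLy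
  have hvq1 := hv.not_ends hR hRn hLq
  have hzc' : z ≠ c := by rintro rfl; exact hyz' hyc
  have hvc' : v ≠ c := by
    rintro rfl
    simp only [List.nodup_cons] at hvRn
    exact hvRn.1 hcR
  by_cases hvz' : G.Adj v z
  · have hvc : G.Adj v c := by
      have := hgap v z y c hvz' hyc hvy hvc' hyz.symm hzc'
      have s1 := G.adj_comm z y
      tauto
    have hvne : ∀ x ∈ R, v ≠ x := by
      rintro x hx rfl
      simp only [List.nodup_cons] at hvRn
      exact hvRn.1 hx
    have hvq2 : G.Adj v q2 := by
      have := hgap v z q2 q1 hvz' hq12.symm (hvne _ hq2R) (hvne _ hq1R) hzq2 hzq1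
      tauto
    have := hv.pt hgap hclaw hR hvRn hcR hvc hq2R hvq2
    subst this
    exact hq2c.2 hyc
  · have hQsub : ∀ x ∈ Q, x = v ∨ x = z ∨ x ∈ R := by
      intro x hx
      rcases List.mem_cons.1 (hQp.mem_iff.1 hx) with h | h
      · exact Or.inl h
      rcases List.mem_cons.1 h with h | h
      · exact Or.inr (Or.inl h)
      · exact Or.inr (Or.inr (hRp.mem_iff.2 (List.mem_cons_of_mem _ h)))
    have hQy : ∀ x ∈ Q, x = v ∨ x ∈ y :: z :: p2 :: l' := by
      intro x hx
      rcases hQsub x hx with h | h | h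
      · exact Or.inl h
      · right; simp [h]
      · right; exact hsub x h
    have hLz : LeafIn G Q z := by
      refine ⟨hQp.mem_iff.2 (by simp), fun a ha b hb h1 h2 => ?_⟩
      have key : ∀ a ∈ Q, G.Adj z a → a = p2 := by
        intro a ha h1
        rcases hQy a ha with rfl | h
        · exact absurd h1.symm hvz'
        · exact hleafz a h h1
      rw [key a ha h1, key b hb h2]
    have hLq' : LeafIn G Q q1 := by
      refine ⟨hQp.mem_iff.2 (List.mem_cons_of_mem _ hq1P), fun a ha b hb h1 h2 => ?_⟩
      have key : ∀ a ∈ Q, G.Adj q1 a → a = q2 := by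
        intro a ha h1
        rcases hQy a ha with rfl | h
        · exact absurd h1.symm hvq1
        · exact hleafq a h h1
      rw [key a ha h1, key b hb h2]
    have hLv : LeafIn G Q v := by
      refine ⟨hQp.mem_iff.2 (by simp), fun a ha b hb h1 h2 => ?_⟩
      have key : ∀ a ∈ Q, G.Adj v a → a ∈ R := by
        intro a ha h1
        rcases hQsub a ha with rfl | rfl | h
        · exact absurd h1 (G.loopless.irrefl _)
        · exact absurd h1 hvz'
        · exact h
      exact hv.pt hgap hclaw hR hvRn (key a ha h1) h1 (key b hb h2) h2
    refine three_leaves hQ hQn hLz hLq' hLv hzq1 hvz.symm ?_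
    rintro rfl
    simp only [List.nodup_cons] at hvRn
    exact hvRn.1 hq1R

lemma star_list (hgap : G.GapFree) (hclaw : G.ClawFree) [DecidableEq V] {z v y : V}
    {P R Q : List V}
    (hP : P.IsChain G.Adj) (hn : (v :: y :: P).Nodup) (hzP : z ∈ P)
    (hy : NoTr G P y) (hR : R.IsChain G.Adj) (hRp : R.Perm (y :: P.erase z))
    (hv : NoTr G R v) (hQ : Q.IsChain G.Adj) (hQp : Q.Perm (v :: P))
    (hlen : 2 ≤ P.length) : False := by
  have hyPn : (y :: P).Nodup := (List.nodup_cons.1 hn).2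
  have hPn : P.Nodup := (List.nodup_cons.1 hyPn).2
  by_cases h1 : ∃ P', P = z :: P'
  · obtain ⟨P', rfl⟩ := h1
    exact star_aux hgap hclaw hP hn hy hR (by simpa using hRp) hv hQ hQp hlen
  by_cases h2 : ∃ P', P.reverse = z :: P'
  · obtain ⟨P', h2⟩ := h2
    have hp : (z :: P').Perm P := by rw [← h2]; exact List.reverse_perm _
    have hch : (z :: P').IsChain G.Adj := by rw [← h2]; exact chain_rev hP
    have hp2 : P'.Perm (P.erase z) := by
      have := hp.erase z
      simpa using this
    refine star_aux hgap hclaw hch ?_ (hy.perm hp) hR (hRp.trans (hp2.symm.cons y)) hv hQ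
      (hQp.trans (hp.symm.cons v)) (by rw [hp.length_eq]; exact hlen)
    exact (((hp.cons y).cons v).nodup_iff).2 hn
  have hRn : R.Nodup := by
    rw [hRp.nodup_iff]
    refine List.nodup_cons.2 ⟨fun h => (List.nodup_cons.1 hyPn).1 (List.mem_of_mem_erase h),
      hPn.erase z⟩
  have hyR : y ∈ R := hRp.mem_iff.2 (by simp)
  obtain ⟨c, hcR, hyc⟩ := chain_nbr hR hyR (by
    rw [hRp.length_eq, List.length_cons, List.length_erase_of_mem hzP]; omega)
  have hcP : c ∈ P := by
    rcases List.mem_cons.1 (hRp.mem_iff.1 hcR) with rfl | h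
    · exact absurd hyc (G.loopless.irrefl _)
    · exact List.mem_of_mem_erase h
  have hsub : ∀ x ∈ R, x ∈ y :: P := by
    intro x hx
    rcases List.mem_cons.1 (hRp.mem_iff.1 hx) with rfl | h
    · simp
    · exact List.mem_cons_of_mem _ (List.mem_of_mem_erase h)
  have hsub2 : ∀ x ∈ P, x ≠ z → x ∈ R := by
    intro x hx hxz
    rw [hRp.mem_iff]
    exact List.mem_cons_of_mem _ ((List.mem_erase_of_ne hxz).2 hx)
  have key : ∀ l : List V, l.Perm P → l.IsChain G.Adj → (¬ ∃ P', l = z :: P') →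
      ∃ p l', l = p :: l' ∧ LeafIn G R p := by
    intro l hl hlc hz
    have hN := hy.perm hl
    have hcl : c ∈ l := hl.mem_iff.2 hcP
    obtain ⟨p, q, l', rfl⟩ := hN.len hclaw hlc hcl hyc
    refine ⟨p, q :: l', rfl, hsub2 p (hl.mem_iff.1 (by simp)) ?_, ?_⟩
    · rintro rfl; exact hz ⟨_, rfl⟩
    · have hnn := ((hl.cons y).nodup_iff).2 hyPn
      have k : ∀ a ∈ R, G.Adj p a → a = q := fun a ha h =>
        hN.leaf hgap hclaw hlc hnn hcl hyc (((hl.cons y).mem_iff).2 (hsub a ha)) h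
      intro a ha b hb ha' hb'
      rw [k a ha ha', k b hb hb']
  obtain ⟨p, l1, hl1, hLp⟩ := key P (List.Perm.refl _) hP h1
  obtain ⟨q, l2, hl2, hLq⟩ := key P.reverse (List.reverse_perm _) (chain_rev hP) h2
  have hLy : LeafIn G R y := by
    refine ⟨hyR, fun a ha b hb hya hyb => ?_⟩
    have hne : ∀ a ∈ R, G.Adj y a → a ∈ P := by
      intro a ha hya
      rcases List.mem_cons.1 (hsub a ha) with rfl | h
      · exact absurd hya (G.loopless.irrefl _)
      · exact h
    exact hy.pt hgap hclaw hP hyPn (hne a ha hya) hya (hne b hb hyb) hyb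
  have hpP : p ∈ P := by rw [hl1]; simp
  have hqP : q ∈ P := by rw [← List.mem_reverse, hl2]; simp
  refine three_leaves hR hRn hLp hLq hLy ?_ ?_ ?_
  · rintro rfl
    subst hl1
    rcases l1 with _ | ⟨u, l1⟩
    · simp at hlen
    have h1 : (p :: u :: l1).reverse.getLast? = some p := by simp
    rw [hl2] at h1
    have hrn : (p :: l2).Nodup := by rw [← hl2]; exact List.nodup_reverse.2 hPn
    have hlen2 : (p :: l2).length = (u :: l1).length + 1 := by rw [← hl2]; simp
    rcases l2 with _ | ⟨w, l2⟩
    · simp at hlen2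
    have := List.mem_of_getLast? (l := w :: l2) (a := p) (by simpa using h1)
    exact (List.nodup_cons.1 hrn).1 this
  · rintro rfl; exact (List.nodup_cons.1 hyPn).1 hpP
  · rintro rfl; exact (List.nodup_cons.1 hyPn).1 hqP

end GraphPart2

section GraphPart3
variable {V : Type*} {G : SimpleGraph V} [DecidableEq V]

/-- vertex sets of paths on `t` vertices -/
def PS (G : SimpleGraph V) (t : ℕ) (W : Finset V) : Prop :=
  ∃ l : List V, l.IsChain G.Adj ∧ l.Nodup ∧ l.length = t ∧ l.toFinset = W

lemma PS.card {t : ℕ} {W : Finset V} (h : PS G t W) : W.card = t := by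
  obtain ⟨l, -, hn, hl, rfl⟩ := h
  rw [List.toFinset_card_of_nodup hn, hl]

lemma perm_of_ins {l m : List V} {y : V} {L : Finset V} (hm : m.Nodup) (hl : l.Nodup)
    (hlL : l.toFinset = L) (hy : y ∉ L) (h : m.toFinset = insert y L) : m.Perm (y :: l) := by
  refine List.perm_of_nodup_nodup_toFinset_eq hm ?_ ?_
  · refine List.nodup_cons.2 ⟨?_, hl⟩
    rw [← List.mem_toFinset, hlL]; exact hy
  · rw [h, List.toFinset_cons, hlL]

lemma noTr_of {l : List V} {y : V} {L : Finset V} {t : ℕ} (hl : l.Nodup) (hlen : l.length = t)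
    (hlL : l.toFinset = L) (hy : y ∉ L) (h : ¬ PS G (t + 1) (insert y L)) : NoTr G l y := by
  intro l' hp hc
  refine h ⟨l', hc, ?_, ?_, ?_⟩
  · rw [hp.nodup_iff]
    refine List.nodup_cons.2 ⟨?_, hl⟩
    rw [← List.mem_toFinset, hlL]; exact hy
  · rw [hp.length_eq, List.length_cons, hlen]
  · rw [List.toFinset_eq_of_perm _ _ hp, List.toFinset_cons, hlL]

lemma star_set (hgap : G.GapFree) (hclaw : G.ClawFree) {t : ℕ} (ht : 2 ≤ t) {L : Finset V}
    {v y z : V} (hL : PS G t L) (hv : v ∉ L) (hy : y ∉ L) (hvy : v ≠ y) (hz : z ∈ L)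
    (hLv : PS G (t + 1) (insert v L)) (hLy : PS G t (insert y (L.erase z))) :
    PS G (t + 1) (insert y L) ∨ PS G (t + 1) (insert v (insert y (L.erase z))) := by
  by_contra hcon
  rw [not_or] at hcon
  obtain ⟨P, hP, hPn, hPl, hPL⟩ := hL
  obtain ⟨R, hR, hRn, hRl, hRL⟩ := hLy
  obtain ⟨Q, hQ, hQn, hQl, hQL⟩ := hLv
  have hyP : y ∉ P := by rw [← List.mem_toFinset, hPL]; exact hy
  have hvP : v ∉ P := by rw [← List.mem_toFinset, hPL]; exact hv
  have hzP : z ∈ P := by rw [← List.mem_toFinset, hPL]; exact hz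
  refine star_list hgap hclaw hP (z := z) (v := v) (y := y) (R := R) (Q := Q) ?_ hzP ?_ hR ?_ ?_
    hQ ?_ (by omega)
  · simp [hvy, hyP, hvP, hPn]
  · exact noTr_of hPn hPl hPL hy hcon.1
  · refine perm_of_ins (L := L.erase z) hRn (hPn.erase z) ?_ (by simp [hy]) hRL
    ext x
    rw [List.mem_toFinset, hPn.mem_erase_iff, Finset.mem_erase, ← hPL, List.mem_toFinset]
  · exact noTr_of hRn hRl hRL (by simp [hvy, hv]) hcon.2
  · exact perm_of_ins hQn hPn hPL hv hQL

/-- linear quotient order on path sets -/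
def LQ (G : SimpleGraph V) (t : ℕ) : Prop :=
  ∃ r : Finset V → ℕ, (∀ W U, PS G t W → PS G t U → r W = r U → W = U) ∧
    ∀ W U, PS G t W → PS G t U → r U < r W →
      ∃ W', PS G t W' ∧ r W' < r W ∧ ∃ y ∈ U, y ∉ W ∧ W' ⊆ insert y W

lemma lex_lt {n x y x' y' : ℕ} (hy : y < n) (h : x < x') : x * n + y < x' * n + y' := by
  have : (x + 1) * n ≤ x' * n := Nat.mul_le_mul_right _ h
  rw [Nat.add_mul] at this
  omega

lemma lex_lt_iff {n x y x' y' : ℕ} (hy : y < n) (hy' : y' < n) :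
    x * n + y < x' * n + y' ↔ x < x' ∨ (x = x' ∧ y < y') := by
  rcases lt_trichotomy x x' with h | h | h
  · have := lex_lt (y' := y') hy h
    simp [this, h]
  · subst h; simp
  · have := lex_lt (y' := y) hy' h
    constructor
    · intro h'; omega
    · intro h'; omega

lemma lex_inj {n x y x' y' : ℕ} (hy : y < n) (hy' : y' < n)
    (h : x * n + y = x' * n + y') : x = x' ∧ y = y' := by
  have h1 := lex_lt_iff (x := x) (x' := x') hy hy'
  have h2 := lex_lt_iff (x := x') (x' := x) hy' hy
  omega

lemma PS.exists_erase {t : ℕ} {W : Finset V} (h : PS G (t + 1) W) :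
    ∃ v ∈ W, PS G t (W.erase v) := by
  obtain ⟨l, hc, hn, hl, rfl⟩ := h
  rcases l with _ | ⟨v, l⟩
  · simp at hl
  · have hv := (List.nodup_cons.1 hn).1
    refine ⟨v, by simp, l, ?_, (List.nodup_cons.1 hn).2, by simpa using hl, ?_⟩
    · exact hc.tail
    · rw [List.toFinset_cons, Finset.erase_insert]; simpa using hv

lemma LQ.step (hgap : G.GapFree) (hclaw : G.ClawFree) {t : ℕ} (ht : 2 ≤ t) {n : ℕ} (pos : V → ℕ)
    (hpos : Function.Injective pos) (hn : ∀ v, pos v < n) (h : LQ G t) : LQ G (t + 1) := by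
  obtain ⟨r, hinj, hr⟩ := h
  let S : Finset V → Set ℕ := fun W =>
    {m | ∃ v ∈ W, PS G t (W.erase v) ∧ m = r (W.erase v) * n + pos v}
  have hS : ∀ W, PS G (t + 1) W → ∃ v ∈ W, PS G t (W.erase v) ∧
      sInf (S W) = r (W.erase v) * n + pos v := by
    intro W hW
    have : (S W).Nonempty := by
      obtain ⟨v, hv, hv'⟩ := hW.exists_erase
      exact ⟨_, v, hv, hv', rfl⟩
    exact Nat.sInf_mem this
  have hle : ∀ W v, v ∈ W → PS G t (W.erase v) → sInf (S W) ≤ r (W.erase v) * n + pos v :=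
    fun W v hv hv' => Nat.sInf_le ⟨v, hv, hv', rfl⟩
  refine ⟨fun W => sInf (S W), ?_, ?_⟩
  · intro W U hW hU he
    obtain ⟨v, hv, hv', e1⟩ := hS W hW
    obtain ⟨u, hu, hu', e2⟩ := hS U hU
    simp only [e1, e2] at he
    obtain ⟨e3, e4⟩ := lex_inj (hn _) (hn _) he
    have e5 := hpos e4
    have e6 := hinj _ _ hv' hu' e3
    subst e5
    rw [← Finset.insert_erase hv, e6, Finset.insert_erase hu]
  · intro W U hW hU hlt
    obtain ⟨v, hv, hL, e1⟩ := hS W hW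
    obtain ⟨u, hu, hM, e2⟩ := hS U hU
    simp only [] at hlt ⊢
    have hlt' := hlt
    rw [e1, e2, lex_lt_iff (hn _) (hn _)] at hlt
    rcases hlt with hlt | ⟨heq, hlt⟩
    · obtain ⟨L', hL', hrL', y, hyM, hyL, hsub⟩ := hr _ _ hL hM hlt
      have hcL := hL.card
      have hcL' := hL'.card
      have hcard : (insert y (W.erase v)).card = t + 1 := by
        rw [Finset.card_insert_of_notMem hyL, hcL]
      have hdiff : ((insert y (W.erase v)) \ L').card = 1 := by
        rw [Finset.card_sdiff_of_subset hsub, hcard, hcL']; omega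
      obtain ⟨z, hz⟩ := Finset.card_eq_one.1 hdiff
      have hzmem : z ∈ (insert y (W.erase v)) \ L' := by rw [hz]; simp
      have hzL' : z ∉ L' := (Finset.mem_sdiff.1 hzmem).2
      have hL'eq : L' = (insert y (W.erase v)).erase z := by
        rw [← Finset.sdiff_sdiff_eq_self hsub, hz, Finset.sdiff_singleton_eq_erase]
      have hyL' : y ∈ L' := by
        by_contra hyL'
        have h1 : L' ⊆ W.erase v := by
          intro x hx
          rcases Finset.mem_insert.1 (hsub hx) with rfl | h
          · exact absurd hx hyL'
          · exact h
        have := Finset.eq_of_subset_of_card_le h1 (by omega)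
        rw [this] at hrL'
        omega
      have hzy : z ≠ y := by rintro rfl; exact hzL' hyL'
      have hzL : z ∈ W.erase v :=
        (Finset.mem_insert.1 (Finset.mem_sdiff.1 hzmem).1).resolve_left hzy
      have hL'eq2 : L' = insert y ((W.erase v).erase z) := by
        rw [hL'eq, Finset.erase_insert_of_ne hzy.symm]
      -- any superset of L' has small rank
      have hsmall : ∀ X w, w ∈ X → X.erase w = L' → sInf (S X) < sInf (S W) := by
        intro X w hw hX
        have h1 := hle X w hw (by rw [hX]; exact hL')
        rw [hX] at h1
        have h2 := lex_lt (y' := pos v) (hn w) hrL'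
        rw [e1]; omega
      have hyv : y ≠ v := by
        rintro rfl
        refine lt_irrefl _ (hsmall W z (Finset.mem_of_mem_erase hzL) ?_)
        rw [hL'eq, Finset.insert_erase hv]
      have hyW : y ∉ W := fun h => hyL (Finset.mem_erase.2 ⟨hyv, h⟩)
      have hyU : y ∈ U := Finset.mem_of_mem_erase hyM
      have hvL : v ∉ W.erase v := Finset.notMem_erase _ _
      rcases star_set hgap hclaw ht hL hvL hyL hyv.symm hzL (by rwa [Finset.insert_erase hv])
        (by rwa [← hL'eq2]) with h | h
      · refine ⟨_, h, hsmall _ z (Finset.mem_insert_of_mem hzL) hL'eq.symm, y, hyU, hyW, ?_⟩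
        exact Finset.insert_subset_insert _ (Finset.erase_subset _ _)
      · rw [← hL'eq2] at h
        have hvL' : v ∉ L' := by
          intro hh
          rcases Finset.mem_insert.1 (hsub hh) with h | h
          · exact hyv h.symm
          · exact hvL h
        refine ⟨_, h, hsmall _ v (Finset.mem_insert_self _ _) (Finset.erase_insert hvL'),
          y, hyU, hyW, ?_⟩
        refine Finset.insert_subset (Finset.mem_insert_of_mem hv) (hsub.trans ?_)
        exact Finset.insert_subset_insert _ (Finset.erase_subset _ _)
    · have hML := hinj _ _ hM hL heq
      refine ⟨U, hU, hlt', u, hu, ?_, ?_⟩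
      · intro huW
        have : u ∉ W.erase v := by rw [← hML]; exact Finset.notMem_erase _ _
        have huv : u = v := by
          by_contra hne
          exact this (Finset.mem_erase.2 ⟨hne, huW⟩)
        rw [huv] at hlt
        omega
      · rw [← Finset.insert_erase hu, hML]
        exact Finset.insert_subset_insert _ (Finset.erase_subset _ _)

end GraphPart3

section GraphPart4
variable {V : Type*} {G : SimpleGraph V} [DecidableEq V]

/-- lexicographic code of an edge `a b` with third vertex `v` -/
def ecode (pos : V → ℕ) (n : ℕ) (a b v : V) : ℕ :=
  (max (pos a) (pos b) * n + min (pos a) (pos b)) * n + pos v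

/-- a triple spanning a three-vertex path -/
def Trip (G : SimpleGraph V) (a b v : V) : Prop :=
  G.Adj a b ∧ v ≠ a ∧ v ≠ b ∧ (G.Adj v a ∨ G.Adj v b)

lemma Trip.ps {a b v : V} (h : Trip G a b v) : PS G 3 {a, b, v} := by
  obtain ⟨hab, ha, hb, h | h⟩ := h
  · refine ⟨[v, a, b], ?_, ?_, rfl, ?_⟩
    · simp [List.isChain_cons_cons, h, hab]
    · simp [ha, hb, hab.ne]
    · ext x; simp; tauto
  · refine ⟨[a, b, v], ?_, ?_, rfl, ?_⟩
    · simp [List.isChain_cons_cons, h.symm, hab]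
    · simp [ha.symm, hb.symm, hab.ne]
    · ext x; simp

lemma PS.trip {W : Finset V} (h : PS G 3 W) : ∃ a b v, Trip G a b v ∧ W = {a, b, v} := by
  obtain ⟨l, hc, hn, hl, rfl⟩ := h
  match l, hl with
  | [a, b, v], _ =>
    simp [List.isChain_cons_cons] at hc hn
    refine ⟨a, b, v, ⟨hc.1, fun h => hn.1.2 h.symm, fun h => hn.2 h.symm, Or.inr hc.2.symm⟩, ?_⟩
    ext x; simp

lemma Trip.swap {a b v : V} (h : Trip G a b v) : Trip G b a v :=
  ⟨h.1.symm, h.2.2.1, h.2.1, h.2.2.2.symm⟩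

lemma ecode_swap (pos : V → ℕ) (n : ℕ) (a b v : V) : ecode pos n a b v = ecode pos n b a v := by
  unfold ecode; rw [max_comm, min_comm]

set_option maxHeartbeats 1000000 in
lemma LQ.base (hgap : G.GapFree) (hclaw : G.ClawFree) {n : ℕ} (pos : V → ℕ)
    (hpos : Function.Injective pos) (hn : ∀ v, pos v < n) : LQ G 3 := by
  let S : Finset V → Set ℕ := fun W =>
    {m | ∃ a b v, Trip G a b v ∧ W = {a, b, v} ∧ m = ecode pos n a b v}
  have hmn : ∀ a b, min (pos a) (pos b) < n := fun a b => lt_of_le_of_lt (min_le_left _ _) (hn a)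
  have hS : ∀ W, PS G 3 W → ∃ a b v, Trip G a b v ∧ W = {a, b, v} ∧ pos a < pos b ∧
      sInf (S W) = ecode pos n a b v := by
    intro W hW
    have : (S W).Nonempty := by
      obtain ⟨a, b, v, h1, h2⟩ := hW.trip
      exact ⟨_, a, b, v, h1, h2, rfl⟩
    obtain ⟨a, b, v, h1, h2, h3⟩ := Nat.sInf_mem this
    rcases lt_trichotomy (pos a) (pos b) with h | h | h
    · exact ⟨a, b, v, h1, h2, h, h3⟩
    · exact absurd (hpos h) h1.1.ne
    · refine ⟨b, a, v, h1.swap, ?_, h, ?_⟩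
      · rw [h2]; exact Finset.insert_comm _ _ _
      · rw [h3, ecode_swap]
  have hle : ∀ a b v, Trip G a b v → sInf (S {a, b, v}) ≤ ecode pos n a b v :=
    fun a b v h => Nat.sInf_le ⟨a, b, v, h, rfl, rfl⟩
  refine ⟨fun W => sInf (S W), ?_, ?_⟩
  · intro W U hW hU he
    obtain ⟨a, b, v, h1, rfl, h2, e1⟩ := hS W hW
    obtain ⟨c, d, u, h3, rfl, h4, e2⟩ := hS U hU
    simp only [e1, e2, ecode] at he
    obtain ⟨e3, e4⟩ := lex_inj (hn _) (hn _) he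
    obtain ⟨e5, e6⟩ := lex_inj (hmn _ _) (hmn _ _) e3
    have k1 : a = c := hpos (by omega)
    have k2 : b = d := hpos (by omega)
    rw [k1, k2, hpos e4]
  · intro W U hW hU hlt
    obtain ⟨a, b, v, h1, rfl, h2, e1⟩ := hS W hW
    obtain ⟨c, d, u, h3, rfl, h4, e2⟩ := hS U hU
    simp only [] at hlt ⊢
    have hlt' := hlt
    rw [e1, e2, ecode, ecode, lex_lt_iff (hn _) (hn _), lex_lt_iff (hmn _ _) (hmn _ _)] at hlt
    have hlt : pos d < pos b ∨ (pos d = pos b ∧ pos c < pos a) ∨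
        (pos d = pos b ∧ pos c = pos a ∧ pos u < pos v) := by
      rcases hlt with hlt | ⟨hlt, h⟩
      · clear hlt'; omega
      · have := lex_inj (hmn _ _) (hmn _ _) hlt
        clear hlt' hlt; omega
    have key : ∀ x y z, Trip G x y z → ecode pos n x y z < ecode pos n a b v →
        PS G 3 {x, y, z} ∧ sInf (S {x, y, z}) < sInf (S {a, b, v}) := by
      intro x y z h hlt
      refine ⟨h.ps, ?_⟩
      rw [e1]; exact lt_of_le_of_lt (hle x y z h) hlt
    have hmin : ∀ x y z, Trip G x y z → ({x, y, z} : Finset V) = {a, b, v} →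
        ¬ ecode pos n x y z < ecode pos n a b v := by
      intro x y z h he hlt
      have := (key x y z h hlt).2
      rw [he] at this
      exact lt_irrefl _ this
    have hcode1 : ∀ x y z, pos x < pos b → pos y < pos b →
        ecode pos n x y z < ecode pos n a b v := by
      intro x y z hx hy
      refine lex_lt (hn _) (lex_lt (hmn _ _) ?_)
      omega
    have hnva : pos v < pos b → ¬ G.Adj v a := by
      intro hv hva
      refine hmin v a b ⟨hva, h1.2.2.1.symm, h1.1.symm.ne, Or.inr h1.1.symm⟩ ?_ (hcode1 _ _ _ hv h2)
      ext x; simp; tauto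
    have hab := h1.1
    by_cases hE : pos c = pos a ∧ pos d = pos b
    · have ka := hpos hE.1
      have kb := hpos hE.2
      subst ka; subst kb
      refine ⟨_, hU, hlt', u, by simp, ?_, ?_⟩
      · have huv : u ≠ v := by rintro rfl; omega
        simp [h3.2.1, h3.2.2.1, huv]
      · intro x; simp only [Finset.mem_insert, Finset.mem_singleton]; rintro (h | h | h) <;> simp [h]
    have hME : ∀ z, ecode pos n c d z < ecode pos n a b v := by
      intro z
      refine lex_lt (hn _) ?_
      rw [lex_lt_iff (hmn _ _) (hmn _ _)]
      omega
    have hcd := h3.1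
    -- shared vertex
    have shared : ∀ s o y, G.Adj s o → G.Adj s y → y ≠ o →
        (∀ z, ecode pos n s y z < ecode pos n a b v) →
        ((s = a ∧ o = b) ∨ (s = b ∧ o = a)) →
        (y = c ∨ y = d) →
        ∃ W', PS G 3 W' ∧ sInf (S W') < sInf (S {a, b, v}) ∧
          ∃ y ∈ ({c, d, u} : Finset V), y ∉ ({a, b, v} : Finset V) ∧ W' ⊆ insert y {a, b, v} := by
      intro s o y hso hsy hyo hlt hx hy
      have hT : Trip G s y o := ⟨hsy, hso.symm.ne, hyo.symm, Or.inl hso.symm⟩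
      have hk := key s y o hT (hlt o)
      refine ⟨_, hk.1, hk.2, y, ?_, ?_, ?_⟩
      · rcases hy with h | h <;> simp [h]
      · intro hyW
        simp only [Finset.mem_insert, Finset.mem_singleton] at hyW
        have hyv : y = v := by
          rcases hyW with h | h | h
          · rcases hx with ⟨h5, h6⟩ | ⟨h5, h6⟩
            · exact absurd (h.trans h5.symm) hsy.symm.ne
            · exact absurd (h.trans h6.symm) hyo
          · rcases hx with ⟨h5, h6⟩ | ⟨h5, h6⟩
            · exact absurd (h.trans h6.symm) hyo
            · exact absurd (h.trans h5.symm) hsy.symm.ne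
          · exact h
        subst hyv
        refine hmin s y o hT ?_ (hlt o)
        rcases hx with ⟨h5, h6⟩ | ⟨h5, h6⟩
        · rw [h5, h6, Finset.pair_comm y b]
        · rw [h5, h6, Finset.pair_comm y a, Finset.insert_comm]
      · rcases hx with ⟨h5, h6⟩ | ⟨h5, h6⟩
        · rw [h5, h6]; intro x; simp only [Finset.mem_insert, Finset.mem_singleton]
          rintro (h | h | h) <;> simp [h]
        · rw [h5, h6]; intro x; simp only [Finset.mem_insert, Finset.mem_singleton]
          rintro (h | h | h) <;> simp [h]
    by_cases hac : a = c
    · subst hac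
      exact shared a b d hab hcd (by rintro rfl; exact hE ⟨rfl, rfl⟩) hME (Or.inl ⟨rfl, rfl⟩)
        (Or.inr rfl)
    by_cases had : a = d
    · subst had
      exact shared a b c hab hcd.symm (by rintro rfl; omega)
        (fun z => by rw [ecode_swap]; exact hME z) (Or.inl ⟨rfl, rfl⟩) (Or.inl rfl)
    by_cases hbc : b = c
    · subst hbc
      exact shared b a d hab.symm hcd (fun h => had h.symm) hME (Or.inr ⟨rfl, rfl⟩) (Or.inr rfl)
    by_cases hbd : b = d
    · subst hbd
      exact shared b a c hab.symm hcd.symm (fun h => hac h.symm)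
        (fun z => by rw [ecode_swap]; exact hME z) (Or.inr ⟨rfl, rfl⟩) (Or.inl rfl)
    have hdb : pos d < pos b := by
      have : pos d ≠ pos b := fun h => hbd (hpos h).symm
      omega
    have hcb : pos c < pos b := by omega
    -- v in M
    have vin : ∀ w, G.Adj v w → w ≠ a → w ≠ b → pos v < pos b → pos w < pos b →
        (w = c ∨ w = d) →
        ∃ W', PS G 3 W' ∧ sInf (S W') < sInf (S {a, b, v}) ∧
          ∃ y ∈ ({c, d, u} : Finset V), y ∉ ({a, b, v} : Finset V) ∧ W' ⊆ insert y {a, b, v} := by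
      intro w hvw hwa hwb hvb hwb' hw
      have hvb' : G.Adj v b := h1.2.2.2.resolve_left (hnva hvb)
      have hk := key v w b ⟨hvw, hvb'.symm.ne, hwb.symm, Or.inl hvb'.symm⟩ (hcode1 _ _ _ hvb hwb')
      refine ⟨_, hk.1, hk.2, w, ?_, ?_, ?_⟩
      · rcases hw with h | h <;> simp [h]
      · simp [hwa, hwb, hvw.symm.ne]
      · intro x; simp only [Finset.mem_insert, Finset.mem_singleton]; rintro (h | h | h) <;> simp [h]
    by_cases hvc : v = c
    · exact vin d (hvc ▸ hcd) (fun h => had h.symm) (fun h => hbd h.symm) (hvc ▸ hcb) hdb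
        (Or.inr rfl)
    by_cases hvd : v = d
    · exact vin c (hvd ▸ hcd.symm) (fun h => hac h.symm) (fun h => hbc h.symm) (hvd ▸ hdb) hcb
        (Or.inl rfl)
    have fin : ∀ y, (y = c ∨ y = d) → (G.Adj a y ∨ G.Adj b y) →
        ∃ W', PS G 3 W' ∧ sInf (S W') < sInf (S {a, b, v}) ∧
          ∃ y ∈ ({c, d, u} : Finset V), y ∉ ({a, b, v} : Finset V) ∧ W' ⊆ insert y {a, b, v} := by
      intro y hy hady
      have hya : y ≠ a := by rintro rfl; exact hy.elim hac had
      have hyb : y ≠ b := by rintro rfl; exact hy.elim hbc hbd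
      have hyv : y ≠ v := by rintro rfl; exact hy.elim hvc hvd
      have hyb' : pos y < pos b := by rcases hy with rfl | rfl <;> assumption
      have hyU : y ∈ ({c, d, u} : Finset V) := by rcases hy with h | h <;> simp [h]
      have hyW : y ∉ ({a, b, v} : Finset V) := by simp [hya, hyb, hyv]
      have fin2 : ∀ x1 x2 x3, Trip G x1 x2 x3 → ecode pos n x1 x2 x3 < ecode pos n a b v →
          ({x1, x2, x3} : Finset V) ⊆ insert y {a, b, v} →
          ∃ W', PS G 3 W' ∧ sInf (S W') < sInf (S {a, b, v}) ∧
          ∃ y ∈ ({c, d, u} : Finset V), y ∉ ({a, b, v} : Finset V) ∧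
            W' ⊆ insert y {a, b, v} := by
        intro x1 x2 x3 hT hlt hsub
        have hk := key x1 x2 x3 hT hlt
        exact ⟨_, hk.1, hk.2, y, hyU, hyW, hsub⟩
      by_cases hay : G.Adj a y
      · exact fin2 a y b ⟨hay, hab.symm.ne, hyb.symm, Or.inl hab.symm⟩ (hcode1 _ _ _ h2 hyb')
          (by intro x; simp only [Finset.mem_insert, Finset.mem_singleton]; rintro (h | h | h) <;> simp [h])
      have hby : G.Adj b y := hady.resolve_left hay
      rcases lt_or_ge (pos y) (pos v) with h | h
      · refine fin2 a b y ⟨hab, hya, hyb, Or.inr hby.symm⟩ ?_ (by intro x; simp only [Finset.mem_insert, Finset.mem_singleton]; rintro (h | h | h) <;> simp [h])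
        unfold ecode
        omega
      have hvy : pos v < pos y := lt_of_le_of_ne h (fun h => hyv (hpos h).symm)
      rcases lt_or_ge (pos y) (pos a) with h' | h'
      · refine fin2 b y a ⟨hby, hab.ne, hya.symm, Or.inl hab⟩ ?_ (by intro x; simp only [Finset.mem_insert, Finset.mem_singleton]; rintro (h | h | h) <;> simp [h])
        refine lex_lt (hn _) ?_
        rw [lex_lt_iff (hmn _ _) (hmn _ _)]
        omega
      have hva := hnva (by omega)
      have hvb' : G.Adj v b := h1.2.2.2.resolve_left hva
      have hyv' : G.Adj y v := by
        have := hclaw b a y v hab.symm hby hvb'.symm hya.symm h1.2.1.symm hyv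
        exact (this.resolve_left hay).resolve_left (fun h => hva h.symm)
      exact fin2 y v b ⟨hyv', hyb.symm, hvb'.symm.ne, Or.inl hby⟩
        (hcode1 _ _ _ hyb' (by omega)) (by intro x; simp only [Finset.mem_insert, Finset.mem_singleton]; rintro (h | h | h) <;> simp [h])
    rcases hgap a b c d hab hcd hac had hbc hbd with h | h | h | h
    · exact fin c (Or.inl rfl) (Or.inl h)
    · exact fin d (Or.inr rfl) (Or.inl h)
    · exact fin c (Or.inl rfl) (Or.inr h)
    · exact fin d (Or.inr rfl) (Or.inr h)

lemma LQ.all [Fintype V] (hgap : G.GapFree) (hclaw : G.ClawFree) (t : ℕ) (ht : 3 ≤ t) :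
    LQ G t := by
  induction t, ht using Nat.le_induction with
  | base =>
    exact LQ.base hgap hclaw (fun v => (Fintype.equivFin V v : ℕ))
      (fun a b h => (Fintype.equivFin V).injective (Fin.ext h)) (fun v => Fin.isLt _)
  | succ t ht ih =>
    exact LQ.step hgap hclaw (by omega) (fun v => (Fintype.equivFin V v : ℕ))
      (fun a b h => (Fintype.equivFin V).injective (Fin.ext h)) (fun v => Fin.isLt _) ih

end GraphPart4

section AlgPart
variable {V K : Type*} [Field K] {k : ℕ}

/-- sign -/
def tsg (K : Type*) [Field K] {k : ℕ} (s : Fin k) (T : Finset (Fin k)) : K :=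
  (-1 : K) ^ (T.filter fun u => u < s).card

lemma tsg_sq (s : Fin k) (T : Finset (Fin k)) : tsg K s T * tsg K s T = 1 := by
  unfold tsg
  rw [← pow_add, ← two_mul, pow_mul]; simp

lemma tsg_insert (s u : Fin k) (T : Finset (Fin k)) (hu : u ∉ T) :
    tsg K s (insert u T) = (if u < s then -1 else 1) * tsg K s T := by
  unfold tsg
  rw [Finset.filter_insert]
  split_ifs with h
  · rw [Finset.card_insert_of_notMem (by simp [hu])]
    ring
  · ring

lemma tsg_erase (s : Fin k) (T : Finset (Fin k)) : tsg K s (T.erase s) = tsg K s T := by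
  unfold tsg
  congr 2
  ext u
  simp only [Finset.mem_filter, Finset.mem_erase]
  constructor
  · rintro ⟨⟨_, h⟩, h'⟩; exact ⟨h, h'⟩
  · rintro ⟨h, h'⟩; exact ⟨⟨h'.ne, h⟩, h'⟩

open Classical in
/-- function version of the differential -/
noncomputable def td (g : Fin k → (V →₀ ℕ)) (x : Finset (Fin k) → K) (T : Finset (Fin k)) : K :=
  ∑ s : Fin k, if s ∉ T ∧ T.sup g = (insert s T).sup g then tsg K s T * x (insert s T) else 0

variable (g : Fin k → (V →₀ ℕ))

lemma td_add (x y : Finset (Fin k) → K) (T) : td g (x + y) T = td g x T + td g y T := by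
  unfold td
  rw [← Finset.sum_add_distrib]
  refine Finset.sum_congr rfl fun s _ => ?_
  split_ifs <;> simp [mul_add]

lemma td_sub (x y : Finset (Fin k) → K) (T) : td g (x - y) T = td g x T - td g y T := by
  unfold td
  rw [← Finset.sum_sub_distrib]
  refine Finset.sum_congr rfl fun s _ => ?_
  split_ifs <;> simp [mul_sub]

lemma td_congr {x y : Finset (Fin k) → K} {T : Finset (Fin k)}
    (h : ∀ s, s ∉ T → x (insert s T) = y (insert s T)) : td g x T = td g y T := by
  unfold td
  refine Finset.sum_congr rfl fun s _ => ?_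
  split_ifs with h1
  · rw [h s h1.1]
  · rfl

lemma td_ne {x : Finset (Fin k) → K} {T : Finset (Fin k)} (h : td g x T ≠ 0) :
    ∃ s, s ∉ T ∧ T.sup g = (insert s T).sup g ∧ x (insert s T) ≠ 0 := by
  obtain ⟨s, -, hs⟩ := Finset.exists_ne_zero_of_sum_ne_zero h
  split_ifs at hs with h1
  · exact ⟨s, h1.1, h1.2, right_ne_zero_of_mul hs⟩
  · exact absurd rfl hs

open Classical in
lemma td_single {x : Finset (Fin k) → K} {T : Finset (Fin k)} (c : Fin k) (hc : c ∉ T)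
    (hs : T.sup g = (insert c T).sup g) (h : ∀ s, s ∉ T → s ≠ c → x (insert s T) = 0) :
    td g x T = tsg K c T * x (insert c T) := by
  unfold td
  rw [Finset.sum_eq_single c]
  · rw [if_pos ⟨hc, hs⟩]
  · intro s _ hsc
    split_ifs with h1
    · rw [h s h1.1 hsc, mul_zero]
    · rfl
  · simp

open Classical in
lemma td_td (x : Finset (Fin k) → K) (T : Finset (Fin k)) : td g (td g x) T = 0 := by
  have e : td g (td g x) T = ∑ p : Fin k × Fin k,
      if (p.1 ∉ T ∧ p.2 ∉ T ∧ p.1 ≠ p.2) ∧ T.sup g = (insert p.2 (insert p.1 T)).sup g then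
        tsg K p.1 T * tsg K p.2 (insert p.1 T) * x (insert p.2 (insert p.1 T)) else 0 := by
    unfold td
    rw [Fintype.sum_prod_type]
    refine Finset.sum_congr rfl fun s _ => ?_
    by_cases h1 : s ∉ T ∧ T.sup g = (insert s T).sup g
    · rw [if_pos h1, Finset.mul_sum]
      refine Finset.sum_congr rfl fun u _ => ?_
      by_cases h2 : u ∉ insert s T ∧ (insert s T).sup g = (insert u (insert s T)).sup g
      · rw [if_pos h2, if_pos, mul_assoc]
        refine ⟨⟨h1.1, ?_, ?_⟩, h1.2.trans h2.2⟩
        · exact fun h => h2.1 (Finset.mem_insert_of_mem h)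
        · intro h; exact h2.1 (Finset.mem_insert.2 (Or.inl h.symm))
      · rw [if_neg h2, if_neg, mul_zero]
        rintro ⟨⟨h3, h4, h5⟩, h6⟩
        refine h2 ⟨?_, h1.2.symm.trans h6⟩
        simp only [Finset.mem_insert, not_or]
        exact ⟨h5.symm, h4⟩
    · rw [if_neg h1]
      symm
      refine Finset.sum_eq_zero fun u _ => if_neg ?_
      rintro ⟨⟨h3, h4, h5⟩, h6⟩
      refine h1 ⟨h3, le_antisymm (Finset.sup_mono (Finset.subset_insert _ _)) ?_⟩
      simp only at h6
      rw [h6]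
      exact Finset.sup_mono (Finset.subset_insert _ _)
  rw [e]
  refine Finset.sum_involution (fun p _ => (p.2, p.1)) ?_ ?_ ?_ ?_
  · rintro ⟨s, u⟩ _
    simp only
    rw [Finset.insert_comm s u T]
    by_cases h : (s ∉ T ∧ u ∉ T ∧ s ≠ u) ∧ T.sup g = (insert u (insert s T)).sup g
    · rw [if_pos h, if_pos ⟨⟨h.1.2.1, h.1.1, h.1.2.2.symm⟩, h.2⟩,
        tsg_insert _ _ _ h.1.1, tsg_insert _ _ _ h.1.2.1]
      rcases lt_or_gt_of_ne h.1.2.2 with h' | h'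
      · rw [if_pos h', if_neg h'.le.not_gt]; ring
      · rw [if_pos h', if_neg h'.le.not_gt]; ring
    · rw [if_neg h, if_neg, add_zero]
      rintro ⟨⟨h1, h2, h3⟩, h4⟩
      exact h ⟨⟨h2, h1, h3.symm⟩, h4⟩
  · rintro ⟨s, u⟩ _ hne heq
    simp only [Prod.mk.injEq] at heq
    refine hne (if_neg ?_)
    rintro ⟨⟨_, _, h⟩, _⟩
    exact h heq.2
  · simp
  · simp

/-- support condition -/
def SuppIn (A B : Finset (Fin k)) (i j : ℕ) (x : Finset (Fin k) → K) : Prop :=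
  ∀ T, x T ≠ 0 → B ⊆ T ∧ T ⊆ A ∪ B ∧ T.card = i ∧ monomialDegree (T.sup g) = j

/-- vanishing of relative homology -/
def Van (K : Type*) [Field K] (A B : Finset (Fin k)) (i j : ℕ) : Prop :=
  ∀ x : Finset (Fin k) → K, SuppIn g A B i j x → (∀ T, B ⊆ T → td g x T = 0) →
    ∃ w : Finset (Fin k) → K, SuppIn g A B (i + 1) j w ∧ ∀ T, B ⊆ T → td g w T = x T

variable {g}

lemma Van.exact {A B : Finset (Fin k)} {i j : ℕ} {a : Fin k} (ha : a ∉ A ∪ B)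
    (h1 : Van g K A B i j) (h2 : Van g K A (insert a B) i j) : Van g K (insert a A) B i j := by
  intro x hx hcyc
  obtain ⟨w1, hw1, hd1⟩ := h2 (fun T => if a ∈ T then x T else 0) (by
      intro T hT
      simp only [] at hT
      split_ifs at hT with haT
      · obtain ⟨k1, k2, k3, k4⟩ := hx T hT
        refine ⟨Finset.insert_subset haT k1, ?_, k3, k4⟩
        refine k2.trans ?_
        rw [Finset.insert_union, Finset.union_insert]
      · exact absurd rfl hT) (by
      intro T hT
      rw [← hcyc T ((Finset.subset_insert _ _).trans hT)]
      refine td_congr g fun s _ => if_pos ?_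
      exact Finset.mem_insert_of_mem (hT (Finset.mem_insert_self _ _)))
  have hw1' : ∀ T, w1 T ≠ 0 → B ⊆ T ∧ T ⊆ insert a A ∪ B ∧ T.card = i + 1 ∧
      monomialDegree (T.sup g) = j := by
    intro T hT
    obtain ⟨k1, k2, k3, k4⟩ := hw1 T hT
    refine ⟨(Finset.subset_insert _ _).trans k1, ?_, k3, k4⟩
    refine k2.trans ?_
    rw [Finset.insert_union, Finset.union_insert]
  have hxz : ∀ T, B ⊆ T → a ∈ T → x T - td g w1 T = 0 := by
    intro T hB haT
    rw [hd1 T (Finset.insert_subset haT hB)]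
    simp [haT]
  obtain ⟨w2, hw2, hd2⟩ := h1 (fun T => if B ⊆ T then x T - td g w1 T else 0) (by
      intro T hT
      simp only [] at hT
      split_ifs at hT with hB
      · have haT : a ∉ T := fun h => hT (hxz T hB h)
        have key : T ⊆ insert a A ∪ B → T ⊆ A ∪ B := by
          intro h y hy
          have := h hy
          rw [Finset.insert_union] at this
          rcases Finset.mem_insert.1 this with rfl | h
          · exact absurd hy haT
          · exact h
        by_cases hxT : x T = 0
        · have : td g w1 T ≠ 0 := by
            intro h; rw [hxT, h, sub_zero] at hT; exact hT rfl
          obtain ⟨s, hs, hsup, hne⟩ := td_ne g this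
          obtain ⟨k1, k2, k3, k4⟩ := hw1' _ hne
          refine ⟨hB, key ((Finset.subset_insert _ _).trans k2), ?_, ?_⟩
          · rw [Finset.card_insert_of_notMem hs] at k3; omega
          · rw [hsup]; exact k4
        · obtain ⟨k1, k2, k3, k4⟩ := hx T hxT
          exact ⟨k1, key k2, k3, k4⟩
      · exact absurd rfl hT) (by
      intro T hT
      have : td g (fun T => if B ⊆ T then x T - td g w1 T else 0) T = td g (x - td g w1) T := by
        refine td_congr g fun s _ => ?_
        rw [if_pos (hT.trans (Finset.subset_insert _ _))]
        rfl
      rw [this, td_sub, hcyc T hT, td_td, sub_zero])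
  refine ⟨w1 + w2, ?_, ?_⟩
  · intro T hT
    by_cases h : w1 T = 0
    · have hT2 : w2 T ≠ 0 := by
        intro h'; apply hT; simp [h, h']
      obtain ⟨k1, k2, k3, k4⟩ := hw2 T hT2
      refine ⟨k1, k2.trans ?_, k3, k4⟩
      exact Finset.union_subset_union_left (Finset.subset_insert _ _)
    · exact hw1' T h
  · intro T hT
    rw [td_add, hd2 T hT, if_pos hT]
    ring

lemma Van.cone {A B : Finset (Fin k)} (i j : ℕ) {c : Fin k} (hcA : c ∈ A) (hcB : c ∉ B)
    (hc : g c ≤ B.sup g) : Van g K A B i j := by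
  intro x hx hcyc
  have hsup : ∀ T, B ⊆ T → T.sup g = (insert c T).sup g := by
    intro T hT
    rw [Finset.sup_insert, sup_eq_right.2 (hc.trans (Finset.sup_mono hT))]
  have hBe : ∀ T, B ⊆ T → B ⊆ T.erase c := fun T hT => Finset.subset_erase.2 ⟨hT, hcB⟩
  let w : Finset (Fin k) → K := fun T => if c ∈ T then tsg K c T * x (T.erase c) else 0
  have hw1 : ∀ T, B ⊆ T → c ∉ T → td g w T = x T := by
    intro T hT hcT
    rw [td_single g c hcT (hsup T hT)]
    · simp only [w, Finset.mem_insert_self, if_true]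
      rw [Finset.erase_insert hcT, ← tsg_erase c (insert c T), Finset.erase_insert hcT,
        ← mul_assoc, tsg_sq, one_mul]
    · intro s hs hsc
      simp only [w]
      rw [if_neg]
      simp only [Finset.mem_insert, not_or]
      exact ⟨fun h => hsc h.symm, hcT⟩
  refine ⟨w, ?_, ?_⟩
  · intro T hT
    simp only [w] at hT
    split_ifs at hT with hcT
    · obtain ⟨k1, k2, k3, k4⟩ := hx _ (right_ne_zero_of_mul hT)
      have hBT := k1.trans (Finset.erase_subset _ _)
      refine ⟨hBT, ?_, ?_, ?_⟩
      · rw [← Finset.insert_erase hcT]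
        exact Finset.insert_subset (Finset.mem_union_left _ hcA) k2
      · rw [Finset.card_erase_of_mem hcT] at k3
        have := Finset.card_pos.2 ⟨c, hcT⟩
        omega
      · rw [hsup _ k1, Finset.insert_erase hcT] at k4
        exact k4
    · exact absurd rfl hT
  · intro T hT
    by_cases hcT : c ∈ T
    · have h0 : td g (x - td g w) (T.erase c) = 0 := by
        rw [td_sub, td_td, hcyc _ (hBe T hT), sub_zero]
      rw [td_single g c (Finset.notMem_erase _ _) (hsup _ (hBe T hT))] at h0
      · rw [Finset.insert_erase hcT] at h0
        have hne : tsg K c (T.erase c) ≠ 0 := by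
          intro h
          have := tsg_sq (K := K) c (T.erase c)
          rw [h] at this; simp at this
        have := (mul_eq_zero.1 h0).resolve_left hne
        simp only [Pi.sub_apply] at this
        exact (sub_eq_zero.1 this).symm
      · intro s hs hsc
        simp only [Pi.sub_apply]
        rw [hw1, sub_self]
        · exact (hBe T hT).trans (Finset.subset_insert _ _)
        · simp only [Finset.mem_insert, Finset.mem_erase, not_or]
          exact ⟨fun h => hsc h.symm, fun h => h.1 rfl⟩
    · exact hw1 T hT hcT

lemma mdeg_eq [Fintype V] (m : V →₀ ℕ) : monomialDegree m = ∑ v, m v := by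
  unfold monomialDegree
  exact Finsupp.sum_fintype _ _ (fun _ => rfl)

lemma mdeg_mono [Fintype V] {m m' : V →₀ ℕ} (h : m ≤ m') :
    monomialDegree m ≤ monomialDegree m' := by
  rw [mdeg_eq, mdeg_eq]
  exact Finset.sum_le_sum fun v _ => h v

lemma mdeg_submod [Fintype V] {b c e : V →₀ ℕ} (h : b ≤ c) :
    monomialDegree (e ⊔ c) + monomialDegree b ≤ monomialDegree c + monomialDegree (e ⊔ b) := by
  simp only [mdeg_eq]
  rw [← Finset.sum_add_distrib, ← Finset.sum_add_distrib]
  refine Finset.sum_le_sum fun v _ => ?_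
  have := h v
  simp only [Finsupp.sup_apply]
  rcases le_total (e v) (c v) with h1 | h1 <;> rcases le_total (e v) (b v) with h2 | h2 <;>
    simp [h1, h2] <;> omega

lemma mdeg_sup_le [Fintype V] (B C : Finset (Fin k))
    (h : ∀ a ∈ C, monomialDegree (g a ⊔ B.sup g) ≤ monomialDegree (B.sup g) + 1) :
    monomialDegree ((C ∪ B).sup g) ≤ monomialDegree (B.sup g) + C.card := by
  induction C using Finset.induction_on with
  | empty => simp
  | insert a C ha ih =>
    have ih := ih fun b hb => h b (Finset.mem_insert_of_mem hb)
    have h1 := h a (Finset.mem_insert_self _ _)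
    have h2 := mdeg_submod (e := g a) (b := B.sup g) (c := (C ∪ B).sup g)
      (Finset.sup_mono Finset.subset_union_right)
    rw [Finset.card_insert_of_notMem ha, Finset.insert_union, Finset.sup_insert]
    omega

lemma Van.var [Fintype V] {B : Finset (Fin k)} (m : ℕ) : ∀ (A : Finset (Fin k)), A.card = m →
    Disjoint A B →
    (∀ a ∈ A, ∃ a' ∈ A, g a' ⊔ B.sup g ≤ g a ⊔ B.sup g ∧
      monomialDegree (g a' ⊔ B.sup g) ≤ monomialDegree (B.sup g) + 1) →
    ∀ i j, monomialDegree (B.sup g) + i < j + B.card → Van g K A B i j := by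
  induction m with
  | zero =>
    intro A hA _ _ i j hij x hx hcyc
    have hA : A = ∅ := Finset.card_eq_zero.1 hA
    subst hA
    have hx0 : x = 0 := by
      funext T
      by_contra hT
      obtain ⟨k1, k2, k3, k4⟩ := hx T hT
      rw [Finset.empty_union] at k2
      have := Finset.Subset.antisymm k1 k2
      subst this
      omega
    refine ⟨0, fun T hT => absurd rfl hT, fun T _ => ?_⟩
    rw [hx0]
    simp [td]
  | succ m ih =>
    intro A hA hdis hH i j hij
    by_cases hred : ∃ a ∈ A, ∃ a' ∈ A, a' ≠ a ∧ g a' ⊔ B.sup g ≤ g a ⊔ B.sup g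
    · obtain ⟨a, ha, a', ha', hne, hle⟩ := hred
      have haB : a ∉ B := Finset.disjoint_left.1 hdis ha
      have ha'B : a' ∉ B := Finset.disjoint_left.1 hdis ha'
      have h1 : Van g K (A.erase a) B i j := by
        refine ih _ (by rw [Finset.card_erase_of_mem ha, hA]; rfl)
          (hdis.mono_left (Finset.erase_subset _ _)) ?_ i j hij
        intro b hb
        obtain ⟨b', hb', k1, k2⟩ := hH b (Finset.mem_of_mem_erase hb)
        by_cases hba : b' = a
        · subst hba
          exact ⟨a', Finset.mem_erase.2 ⟨hne, ha'⟩, hle.trans k1, (mdeg_mono hle).trans k2⟩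
        · exact ⟨b', Finset.mem_erase.2 ⟨hba, hb'⟩, k1, k2⟩
      have h2 : Van g K (A.erase a) (insert a B) i j := by
        refine Van.cone i j (c := a') (Finset.mem_erase.2 ⟨hne, ha'⟩) ?_ ?_
        · simp [hne, ha'B]
        · rw [Finset.sup_insert]
          exact le_sup_left.trans hle
      have := Van.exact (a := a) (by simp [haB]) h1 h2
      rwa [Finset.insert_erase ha] at this
    · have hdeg : ∀ a ∈ A, monomialDegree (g a ⊔ B.sup g) ≤ monomialDegree (B.sup g) + 1 := by
        intro a ha
        obtain ⟨a', ha', k1, k2⟩ := hH a ha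
        by_cases h : a' = a
        · rwa [h] at k2
        · exact absurd ⟨a, ha, a', ha', h, k1⟩ hred
      intro x hx hcyc
      have hx0 : x = 0 := by
        funext T
        by_contra hT
        obtain ⟨k1, k2, k3, k4⟩ := hx T hT
        have h1 := mdeg_sup_le (g := g) B (T \ B) (by
          intro a ha
          refine hdeg a ?_
          have := k2 (Finset.mem_sdiff.1 ha).1
          rcases Finset.mem_union.1 this with h | h
          · exact h
          · exact absurd h (Finset.mem_sdiff.1 ha).2)
        rw [Finset.sdiff_union_of_subset k1, Finset.card_sdiff_of_subset k1, k4, k3] at h1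
        have := Finset.card_le_card k1
        omega
      refine ⟨0, fun T hT => absurd rfl hT, fun T _ => ?_⟩
      rw [hx0]
      simp [td]

lemma Van.main [Fintype V] (t : ℕ) (Rp : Finset (Fin k)) (ρ : Fin k → ℕ)
    (hinj : ∀ a ∈ Rp, ∀ b ∈ Rp, ρ a = ρ b → a = b)
    (hdeg : ∀ a ∈ Rp, monomialDegree (g a) = t)
    (hlq : ∀ a ∈ Rp, ∀ b ∈ Rp, ρ b < ρ a → ∃ a' ∈ Rp, ρ a' < ρ a ∧
      g a' ⊔ g a ≤ g b ⊔ g a ∧ monomialDegree (g a' ⊔ g a) ≤ t + 1)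
    (hrep : ∀ a, ∃ b ∈ Rp, g b ≤ g a) (i j : ℕ) (hij : t + i < j) :
    Van g K Finset.univ ∅ (i + 1) j := by
  have phase1 : ∀ n, Van g K (Rp.filter fun a => ρ a < n) ∅ (i + 1) j := by
    intro n
    induction n with
    | zero =>
      intro x hx _
      have hx0 : x = 0 := by
        funext T
        by_contra hT
        obtain ⟨k1, k2, k3, k4⟩ := hx T hT
        have : T = ∅ := by simpa using k2
        subst this
        simp at k3
      refine ⟨0, fun T hT => absurd rfl hT, fun T _ => ?_⟩
      rw [hx0]
      simp [td]
    | succ n ih =>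
      by_cases h : ∃ a ∈ Rp, ρ a = n
      · obtain ⟨a, ha, han⟩ := h
        have e : (Rp.filter fun a => ρ a < n + 1) = insert a (Rp.filter fun a => ρ a < n) := by
          ext b
          simp only [Finset.mem_filter, Finset.mem_insert]
          constructor
          · rintro ⟨hb, hb'⟩
            by_cases hbn : ρ b = n
            · exact Or.inl (hinj b hb a ha (hbn.trans han.symm))
            · exact Or.inr ⟨hb, by omega⟩
          · rintro (rfl | ⟨hb, hb'⟩)
            · exact ⟨ha, by omega⟩
            · exact ⟨hb, by omega⟩
        rw [e]
        refine Van.exact (by simp [han]) ih ?_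
        refine Van.var _ _ rfl ?_ ?_ _ _ ?_
        · simp [han]
        · intro b hb
          obtain ⟨hb, hb'⟩ := Finset.mem_filter.1 hb
          obtain ⟨a', ha', k1, k2, k3⟩ := hlq a ha b hb (by omega)
          refine ⟨a', Finset.mem_filter.2 ⟨ha', by omega⟩, ?_, ?_⟩
          · simpa using k2
          · simpa [hdeg a ha] using k3
        · simp [hdeg a ha]; omega
      · have e : (Rp.filter fun a => ρ a < n + 1) = (Rp.filter fun a => ρ a < n) := by
          ext b
          simp only [Finset.mem_filter]
          constructor
          · rintro ⟨hb, hb'⟩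
            refine ⟨hb, ?_⟩
            by_contra hbn
            exact h ⟨b, hb, by omega⟩
          · rintro ⟨hb, hb'⟩
            exact ⟨hb, by omega⟩
        rw [e]; exact ih
  have phase1' : Van g K Rp ∅ (i + 1) j := by
    have := phase1 (Rp.sup ρ + 1)
    rwa [Finset.filter_true_of_mem] at this
    intro a ha
    exact Nat.lt_succ_of_le (Finset.le_sup (f := ρ) ha)
  have phase2 : ∀ C : Finset (Fin k), Van g K (Rp ∪ C) ∅ (i + 1) j := by
    intro C
    induction C using Finset.induction_on with
    | empty => simpa using phase1'
    | insert a C ha ih =>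
      rw [Finset.union_insert]
      by_cases h : a ∈ Rp ∪ C
      · rwa [Finset.insert_eq_of_mem h]
      · refine Van.exact (by simpa using h) ih ?_
        obtain ⟨b, hb, hle⟩ := hrep a
        refine Van.cone _ _ (c := b) (Finset.mem_union_left _ hb) ?_ ?_
        · simp only [Finset.mem_insert, Finset.notMem_empty, or_false]
          rintro rfl
          exact h (Finset.mem_union_left _ hb)
        · simpa using hle
  have := phase2 Finset.univ
  rwa [Finset.union_eq_right.2 (Finset.subset_univ _)] at this

end AlgPart

section Final
variable {V K : Type*} [Field K] {k : ℕ}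

lemma taylorDiff_apply (g : Fin k → (V →₀ ℕ)) (x : Finset (Fin k) →₀ K) (T : Finset (Fin k)) :
    taylorDiff g x T = td g x T := by
  classical
  induction x using Finsupp.induction_linear with
  | zero => simp [td]
  | add x y hx hy =>
    rw [map_add, Finsupp.add_apply, hx, hy, Finsupp.coe_add, td_add]
  | single T' c =>
    have e : taylorDiff g (Finsupp.single T' c) = c • taylorBoundary (K := K) g T' := by
      simp [taylorDiff]
    rw [e, Finsupp.smul_apply]
    unfold taylorBoundary td
    rw [Finsupp.finset_sum_apply, smul_eq_mul, Finset.mul_sum,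
      ← Finset.sum_subset (Finset.subset_univ T')]
    · refine Finset.sum_congr rfl fun s hs => ?_
      by_cases h1 : T'.erase s = T
      · subst h1
        rw [Finset.insert_erase hs]
        unfold taylorLcm
        by_cases h2 : (T'.erase s).sup g = T'.sup g
        · rw [if_pos h2, if_pos ⟨Finset.notMem_erase _ _, h2⟩, tsg_erase]
          simp [tsg, mul_comm]
        · rw [if_neg h2, if_neg (fun h => h2 h.2)]
          simp
      · have h3 : ∀ h : s ∉ T, insert s T ≠ T' := by
          intro h h'
          exact h1 (by rw [← h', Finset.erase_insert h])
        have l0 : (if taylorLcm g (T'.erase s) = taylorLcm g T' then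
            ((-1 : K) ^ (T'.filter fun u => u < s).card) • Finsupp.single (T'.erase s) (1 : K)
            else 0) T = 0 := by
          split_ifs
          · simp [h1]
          · simp
        rw [l0, mul_zero]
        split_ifs with h4
        · rw [Finsupp.single_eq_of_ne (h3 h4.1), mul_zero]
        · rfl
    · intro s _ hs
      split_ifs with h4
      · rw [Finsupp.single_eq_of_ne, mul_zero]
        rintro rfl
        exact hs (Finset.mem_insert_self _ _)
      · rfl

lemma mem_piece (g : Fin k → (V →₀ ℕ)) (i j : ℕ) (x : Finset (Fin k) →₀ K) :
    x ∈ taylorPiece g i j ↔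
      ∀ T, x T ≠ 0 → T.card = i ∧ monomialDegree (T.sup g) = j := by
  have e : taylorPiece (K := K) g i j =
      Finsupp.supported K K {T | T.card = i ∧ monomialDegree (T.sup g) = j} := by
    rw [Finsupp.supported_eq_span_single, taylorPiece]
    congr 1
    ext f
    constructor
    · rintro ⟨T, h1, h2, rfl⟩
      exact ⟨T, ⟨h1, h2⟩, rfl⟩
    · rintro ⟨T, ⟨h1, h2⟩, rfl⟩
      exact ⟨T, h1, h2, rfl⟩
  rw [e, Finsupp.mem_supported]
  constructor
  · intro h T hT
    exact h (by simpa using hT)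
  · intro h T hT
    exact h T (by simpa using hT)

lemma not_homology (g : Fin k → (V →₀ ℕ)) (i j : ℕ) (h : Van g K Finset.univ ∅ i j) :
    ¬ taylorHomologyNonzero (K := K) g i j := by
  unfold taylorHomologyNonzero
  rw [not_not]
  rintro x ⟨hx1, hx2⟩
  rw [SetLike.mem_coe, mem_piece] at hx2
  rw [SetLike.mem_coe, LinearMap.mem_ker] at hx1
  obtain ⟨w, hw, hd⟩ := h x (fun T hT => ⟨Finset.empty_subset _, by simp, hx2 T hT⟩) (by
    intro T _
    rw [← taylorDiff_apply, hx1]; rfl)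
  refine ⟨Finsupp.equivFunOnFinite.symm w, ?_, ?_⟩
  · rw [SetLike.mem_coe, mem_piece]
    intro T hT
    exact (hw T (by simpa using hT)).2.2
  · ext T
    rw [taylorDiff_apply]
    have : (⇑(Finsupp.equivFunOnFinite.symm w) : Finset (Fin k) → K) = w := by
      ext; simp
    rw [this]
    exact hd T (Finset.empty_subset _)

/-- squarefree exponent vector -/
noncomputable def ind (W : Finset V) : V →₀ ℕ := ∑ v ∈ W, Finsupp.single v 1

lemma ind_apply [DecidableEq V] (W : Finset V) (v : V) : ind W v = if v ∈ W then 1 else 0 := by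
  unfold ind
  rw [Finsupp.finset_sum_apply]
  simp [Finsupp.single_apply]

lemma ind_le [DecidableEq V] {W U : Finset V} : ind W ≤ ind U ↔ W ⊆ U := by
  constructor
  · intro h v hv
    have := h v
    rw [ind_apply, ind_apply, if_pos hv] at this
    by_contra hvU
    rw [if_neg hvU] at this
    omega
  · intro h v
    rw [ind_apply, ind_apply]
    by_cases hv : v ∈ W
    · rw [if_pos hv, if_pos (h hv)]
    · rw [if_neg hv]; exact Nat.zero_le _

lemma ind_supp [DecidableEq V] (W : Finset V) : (ind W).support = W := by
  ext v
  rw [Finsupp.mem_support_iff, ind_apply]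
  by_cases hv : v ∈ W <;> simp [hv]

lemma ind_inj [DecidableEq V] {W U : Finset V} (h : ind W = ind U) : W = U := by
  rw [← ind_supp W, h, ind_supp]

lemma mdeg_ind [Fintype V] [DecidableEq V] (W : Finset V) : monomialDegree (ind W) = W.card := by
  rw [mdeg_eq]
  simp [ind_apply]

lemma mdeg_eq_of_le [Fintype V] {m m' : V →₀ ℕ} (h : m ≤ m')
    (h' : monomialDegree m = monomialDegree m') : m = m' := by
  rw [mdeg_eq, mdeg_eq] at h'
  ext v
  exact (Finset.sum_eq_sum_iff_of_le (fun i _ => h i)).1 h' v (Finset.mem_univ _)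

lemma pathIdeal_eq [DecidableEq V] (G : SimpleGraph V) (t : ℕ) :
    pathIdeal (K := K) G t =
      Ideal.span ((fun s => monomial s (1 : K)) '' {s | ∃ W, PS G t W ∧ s = ind W}) := by
  unfold pathIdeal
  congr 1
  have key : ∀ l : List V, l.Nodup → (l.map (X (R := K))).prod =
      monomial (ind l.toFinset) (1 : K) := by
    intro l hl
    rw [← List.prod_toFinset _ hl, ind, monomial_sum_one]
    rfl
  ext p
  constructor
  · rintro ⟨l, ⟨h1, h2⟩, h3, rfl⟩
    exact ⟨_, ⟨l.toFinset, ⟨l, h1, h2, h3, rfl⟩, rfl⟩, (key l h2).symm⟩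
  · rintro ⟨_, ⟨W, ⟨l, h1, h2, h3, rfl⟩, rfl⟩, rfl⟩
    exact ⟨l, ⟨h1, h2⟩, h3, (key l h2).symm⟩

lemma mono_mem {s : Set (V →₀ ℕ)} {m : V →₀ ℕ} :
    monomial m (1 : K) ∈ Ideal.span ((fun s => monomial s (1 : K)) '' s) ↔ ∃ a ∈ s, a ≤ m := by
  classical
  rw [mem_ideal_span_monomial_image]
  rw [support_monomial, if_neg one_ne_zero]
  simp

lemma monomialSpan_eq (g : Fin k → (V →₀ ℕ)) : monomialSpan (K := K) g =
    Ideal.span ((fun s => monomial s (1 : K)) '' Set.range g) := by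
  unfold monomialSpan
  rw [← Set.range_comp]; rfl

lemma tor_bound [Fintype V] (G : SimpleGraph V) (t : ℕ) (ht : 2 < t) (hgap : G.GapFree)
    (hclaw : G.ClawFree) (i j : ℕ) (h : IdealTorNonzero (pathIdeal (K := K) G t) i j) :
    j ≤ t + i := by
  classical
  by_contra hij
  obtain ⟨k, g, hI, hne⟩ := h
  refine not_homology g (i + 1) j ?_ hne
  rw [pathIdeal_eq, monomialSpan_eq] at hI
  have h1 : ∀ a, ∃ W, PS G t W ∧ ind W ≤ g a := by
    intro a
    have : monomial (g a) (1 : K) ∈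
        Ideal.span ((fun s => monomial s (1 : K)) '' {s | ∃ W, PS G t W ∧ s = ind W}) := by
      rw [hI, mono_mem]; exact ⟨_, ⟨a, rfl⟩, le_rfl⟩
    rw [mono_mem] at this
    obtain ⟨_, ⟨W, hW, rfl⟩, hle⟩ := this
    exact ⟨W, hW, hle⟩
  have h2 : ∀ W, ∃ a, PS G t W → g a = ind W := by
    intro W
    by_cases hW : PS G t W
    · have : monomial (ind W) (1 : K) ∈
          Ideal.span ((fun s => monomial s (1 : K)) '' Set.range g) := by
        rw [← hI, mono_mem]; exact ⟨_, ⟨W, hW, rfl⟩, le_rfl⟩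
      rw [mono_mem] at this
      obtain ⟨_, ⟨a, rfl⟩, hle⟩ := this
      obtain ⟨U, hU, hUa⟩ := h1 a
      have hUW := ind_le.1 (hUa.trans hle)
      have : U = W := Finset.eq_of_subset_of_card_le hUW (by rw [hU.card, hW.card])
      subst this
      exact ⟨a, fun _ => le_antisymm hle hUa⟩
    · rcases k with _ | k
      · exfalso
        have hemp : taylorHomologyNonzero (K := K) g (i + 1) j → False := by
          refine not_homology g (i + 1) j ?_
          intro x hx _
          refine ⟨0, fun T hT => absurd rfl hT, fun T _ => ?_⟩
          have : x T = 0 := by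
            by_contra hT
            have := (hx T hT).2.2.1
            rw [Finset.eq_empty_of_isEmpty T] at this
            simp at this
          rw [this]; simp [td]
        exact hemp hne
      · exact ⟨0, fun h => absurd h hW⟩
  choose rep hrep using h2
  obtain ⟨r, hrinj, hr⟩ := LQ.all hgap hclaw t ht
  refine Van.main t (Finset.univ.filter fun a => ∃ W, PS G t W ∧ a = rep W)
    (fun a => r (g a).support) ?_ ?_ ?_ ?_ i j (by omega)
  · intro a ha b hb hab
    obtain ⟨W, hW, rfl⟩ := (Finset.mem_filter.1 ha).2
    obtain ⟨U, hU, rfl⟩ := (Finset.mem_filter.1 hb).2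
    simp only [hrep W hW, hrep U hU, ind_supp] at hab
    rw [hrinj W U hW hU hab]
  · intro a ha
    obtain ⟨W, hW, rfl⟩ := (Finset.mem_filter.1 ha).2
    rw [hrep W hW, mdeg_ind, hW.card]
  · intro a ha b hb hab
    obtain ⟨W, hW, rfl⟩ := (Finset.mem_filter.1 ha).2
    obtain ⟨U, hU, rfl⟩ := (Finset.mem_filter.1 hb).2
    simp only [hrep W hW, hrep U hU, ind_supp] at hab ⊢
    obtain ⟨W', hW', hlt, y, hyU, hyW, hsub⟩ := hr W U hW hU hab
    refine ⟨rep W', Finset.mem_filter.2 ⟨Finset.mem_univ _, W', hW', rfl⟩, ?_, ?_, ?_⟩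
    · rw [hrep W' hW', ind_supp]; exact hlt
    · rw [hrep W' hW']
      refine sup_le ?_ le_sup_right
      intro v
      rw [Finsupp.sup_apply, ind_apply, ind_apply, ind_apply]
      by_cases hv : v ∈ W'
      · rw [if_pos hv]
        rcases Finset.mem_insert.1 (hsub hv) with rfl | h
        · rw [if_pos hyU]; exact le_sup_left
        · rw [if_pos h]; exact le_sup_right
      · rw [if_neg hv]; exact Nat.zero_le _
    · rw [hrep W' hW']
      refine (mdeg_mono (sup_le (ind_le.2 hsub) (ind_le.2 (Finset.subset_insert y W)))).trans ?_
      rw [mdeg_ind, Finset.card_insert_of_notMem hyW, hW.card]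
  · intro a
    obtain ⟨W, hW, hle⟩ := h1 a
    refine ⟨rep W, Finset.mem_filter.2 ⟨Finset.mem_univ _, W, hW, rfl⟩, ?_⟩
    rw [hrep W hW]; exact hle

lemma tor_attained [Fintype V] (G : SimpleGraph V) (t : ℕ) (ht : 2 < t)
    (hnz : pathIdeal (K := K) G t ≠ ⊥) : IdealTorNonzero (pathIdeal (K := K) G t) 0 t := by
  classical
  let F : Finset (Finset V) := Finset.univ.filter fun W => PS G t W
  have hF : ∀ W, W ∈ F ↔ PS G t W := fun W => by simp [F]
  let e := F.equivFin
  let g : Fin F.card → (V →₀ ℕ) := fun a => ind (e.symm a : Finset V)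
  have hgdeg : ∀ a, monomialDegree (g a) = t := fun a => by
    simp only [g]
    rw [mdeg_ind, ((hF _).1 (e.symm a).2).card]
  have hginj : Function.Injective g := fun a b h =>
    e.symm.injective (Subtype.ext (ind_inj h))
  have hI : pathIdeal (K := K) G t = monomialSpan g := by
    rw [pathIdeal_eq, monomialSpan_eq]
    congr 2
    ext s
    constructor
    · rintro ⟨W, hW, rfl⟩
      exact ⟨e ⟨W, (hF W).2 hW⟩, by simp [g]⟩
    · rintro ⟨a, rfl⟩
      exact ⟨_, (hF _).1 (e.symm a).2, rfl⟩
  have hex : ∃ W, PS G t W := by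
    by_contra hne
    apply hnz
    rw [pathIdeal_eq]
    have : {s : V →₀ ℕ | ∃ W, PS G t W ∧ s = ind W} = ∅ := by
      ext s
      simp only [Set.mem_setOf_eq, Set.mem_empty_iff_false, iff_false]
      rintro ⟨W, hW, -⟩
      exact hne ⟨W, hW⟩
    rw [this]; simp
  obtain ⟨W, hW⟩ := hex
  refine ⟨F.card, g, hI, ?_⟩
  let a0 : Fin F.card := e ⟨W, (hF W).2 hW⟩
  intro hle
  have hmem : Finsupp.single {a0} (1 : K) ∈
      LinearMap.ker (taylorDiff (K := K) g) ⊓ taylorPiece (K := K) g (0 + 1) t := by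
    refine ⟨?_, ?_⟩
    · rw [SetLike.mem_coe, LinearMap.mem_ker]
      ext T
      rw [taylorDiff_apply]
      by_contra hT
      obtain ⟨s, hs, hsup, hne⟩ := td_ne g hT
      have hsT : insert s T = {a0} := by
        by_contra h
        exact hne (Finsupp.single_eq_of_ne h)
      have hsa : s = a0 := by
        have : s ∈ insert s T := Finset.mem_insert_self _ _
        rw [hsT] at this
        simpa using this
      have hTe : T = ∅ := by
        rw [Finset.eq_empty_iff_forall_notMem]
        intro u hu
        have : u ∈ insert s T := Finset.mem_insert_of_mem hu
        rw [hsT] at this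
        have : u = a0 := by simpa using this
        rw [this, ← hsa] at hu
        exact hs hu
      subst hTe
      have h0 := congrArg monomialDegree hsup
      rw [hsT, Finset.sup_singleton, hgdeg] at h0
      rw [Finset.sup_empty, mdeg_eq] at h0
      have hz : ∑ v, (⊥ : V →₀ ℕ) v = 0 := Finset.sum_eq_zero fun v _ => rfl
      omega
    · rw [SetLike.mem_coe, mem_piece]
      intro T hT
      have : T = {a0} := by
        by_contra h
        exact hT (Finsupp.single_eq_of_ne h)
      subst this
      simp [hgdeg]
  obtain ⟨w, hw, hdw⟩ := hle hmem
  rw [SetLike.mem_coe, mem_piece] at hw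
  have hw0 : w = 0 := by
    ext T
    by_contra hT
    obtain ⟨h1, h2⟩ := hw T hT
    obtain ⟨a, b, hab, rfl⟩ := Finset.card_eq_two.1 (by omega : T.card = 2)
    have ha : g a ≤ ({a, b} : Finset _).sup g := Finset.le_sup (f := g) (by simp)
    have hb : g b ≤ ({a, b} : Finset _).sup g := Finset.le_sup (f := g) (by simp)
    have ea := mdeg_eq_of_le ha (by rw [hgdeg, h2])
    have eb := mdeg_eq_of_le hb (by rw [hgdeg, h2])
    exact hab (hginj (ea.trans eb.symm))
  rw [hw0, map_zero] at hdw
  have := DFunLike.congr_fun hdw {a0}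
  simp at this

end Final

/-- For an integer `t > 2`, if `G` is gap-free and claw-free with
`I_t(G) ≠ 0`, then `I_t(G)` has a linear minimal free resolution, i.e.
`reg (I_t(G)) = t`. -/
theorem stmt13 {V K : Type*} [Fintype V] [Field K] (G : SimpleGraph V)
    (t : ℕ) (ht : 2 < t) (hgap : G.GapFree) (hclaw : G.ClawFree)
    (hnz : pathIdeal (K := K) G t ≠ ⊥) :
    reg (pathIdeal (K := K) G t) = t := by
  refine IsGreatest.csSup_eq ⟨⟨0, t, tor_attained G t ht hnz, rfl⟩, ?_⟩
  rintro d ⟨i, j, h, rfl⟩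
  have := tor_bound G t ht hgap hclaw i j h
  omega
end

section
/- Let G be a finite simple claw-free graph, let x_1 x_2 ⋯ x_t be a path on t distinct vertices of G (t ≥ 3), and let a be a vertex of G not among x_1, …, x_t such that a is adjacent in G to one of x_1, x_2, x_{t−1}, x_t. Then G contains a path on t+1 distW vertices whose vertex set is {a, x_1, …, x_t}; in particular, x_a · x_{x_1} ⋯ x_{x_t} lies in the (t+1)-path ideal I_{t+1}(G). -/
open MvPolynomial

theorem aux14 {V : Type*} (G : SimpleGraph V) (hclaw : G.ClawFree) (x y z : V) (r : List V)
    (hpath : G.IsPathList (x :: y :: z :: r)) (a : V) (ha : a ∉ x :: y :: z :: r)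
    (hadj : G.Adj a x ∨ G.Adj a y) :
    ∃ l' : List V, l'.IsChain G.Adj ∧ l'.Perm (a :: x :: y :: z :: r) := by
  obtain ⟨hc, hn⟩ := hpath
  have hc : (x :: y :: z :: r).IsChain G.Adj := hc
  have h0 : G.Adj a x → ∃ l' : List V, l'.IsChain G.Adj ∧ l'.Perm (a :: x :: y :: z :: r) :=
    fun h => ⟨a :: x :: y :: z :: r, List.isChain_cons_cons.2 ⟨h, hc⟩, List.Perm.refl _⟩
  rcases hadj with h | h
  · exact h0 h
  · simp only [List.isChain_cons_cons] at hc
    obtain ⟨hxy, hyz, hr⟩ := hc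
    simp only [List.mem_cons, not_or] at ha
    simp only [List.nodup_cons, List.mem_cons, not_or] at hn
    rcases hclaw y a x z h.symm hxy.symm hyz ha.1 ha.2.2.1 hn.1.2.1 with h1 | h1 | h1
    · exact h0 h1
    · refine ⟨x :: y :: a :: z :: r, ?_, ?_⟩
      · simp only [List.isChain_cons_cons]
        exact ⟨hxy, h.symm, h1, hr⟩
      · exact ((List.Perm.swap a y (z :: r)).cons x).trans (List.Perm.swap a x _)
    · refine ⟨a :: y :: x :: z :: r, ?_, ?_⟩
      · simp only [List.isChain_cons_cons]
        exact ⟨h, hxy.symm, h1, hr⟩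
      · exact (List.Perm.swap x y _).cons a

theorem aux14' {V : Type*} (G : SimpleGraph V) (hclaw : G.ClawFree) (l : List V)
    (h3 : 3 ≤ l.length) (hpath : G.IsPathList l) (a : V) (ha : a ∉ l)
    (hadj : G.Adj a (l[0]) ∨ G.Adj a (l[1])) :
    ∃ l' : List V, l'.IsChain G.Adj ∧ l'.Perm (a :: l) := by
  match l, h3 with
  | x :: y :: z :: r, _ => exact aux14 G hclaw x y z r hpath a ha hadj

/-- If `G` is claw-free, `x_1 ⋯ x_t` (`t ≥ 3`) is a path on `t` distinct
vertices of `G`, and `a ∉ {x_1, …, x_t}` is adjacent to one of `x_1, x_2, x_{t-1}, x_t`,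
then `G` has a path on `t+1` distinct vertices with vertex set `{a, x_1, …, x_t}`; in
particular `x_a ⋅ x_{x_1} ⋯ x_{x_t} ∈ I_{t+1}(G)`. -/
theorem stmt14 {V K : Type*} [Fintype V] [Field K] (G : SimpleGraph V)
    (hclaw : G.ClawFree) (t : ℕ) (ht : 3 ≤ t) (l : List V)
    (hpath : G.IsPathList l) (hlen : l.length = t) (a : V) (ha : a ∉ l)
    (hadj : G.Adj a (l.get ⟨0, by omega⟩) ∨ G.Adj a (l.get ⟨1, by omega⟩) ∨
      G.Adj a (l.get ⟨t - 2, by omega⟩) ∨ G.Adj a (l.get ⟨t - 1, by omega⟩)) :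
    (∃ l' : List V, G.IsPathList l' ∧ l'.length = t + 1 ∧
        (∀ v, v ∈ l' ↔ v = a ∨ v ∈ l)) ∧
      X a * (l.map X).prod ∈ pathIdeal (K := K) G (t + 1) := by
  have key : ∃ l' : List V, l'.IsChain G.Adj ∧ l'.Perm (a :: l) := by
    subst hlen
    have hrev : G.IsPathList l.reverse := by
      refine ⟨?_, List.nodup_reverse.2 hpath.2⟩
      have h1 : l.IsChain G.Adj := hpath.1
      show l.reverse.IsChain G.Adj
      rw [List.isChain_reverse]
      exact h1.imp fun _ _ h => h.symm
    have hR : (G.Adj a (l.reverse[0]'(by simp; omega)) ∨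
        G.Adj a (l.reverse[1]'(by simp; omega))) →
        ∃ l' : List V, l'.IsChain G.Adj ∧ l'.Perm (a :: l) := by
      intro h
      obtain ⟨l', h1, h2⟩ := aux14' G hclaw l.reverse (by simpa using ht) hrev a
        (by simpa using ha) h
      exact ⟨l', h1, h2.trans ((List.reverse_perm l).cons a)⟩
    simp only [List.getElem_reverse] at hR
    rcases hadj with h | h | h | h
    · exact aux14' G hclaw l ht hpath a ha (Or.inl h)
    · exact aux14' G hclaw l ht hpath a ha (Or.inr h)
    · exact hR (Or.inr h)
    · exact hR (Or.inl h)
  obtain ⟨l', hc, hp⟩ := key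
  have hP : G.IsPathList l' := ⟨hc, hp.nodup_iff.2 (List.nodup_cons.2 ⟨ha, hpath.2⟩)⟩
  have hL : l'.length = t + 1 := by rw [hp.length_eq, List.length_cons, hlen]
  refine ⟨⟨l', hP, hL, fun v => by rw [hp.mem_iff, List.mem_cons]⟩, ?_⟩
  refine Ideal.subset_span ⟨l', hP, hL, ?_⟩
  rw [(hp.map X).prod_eq, List.map_cons, List.prod_cons]
end

section
/- Let J ⊆ I be two monomial ideals in a polynomial ring S over a field K, where I is generated in degree d by monomials m_1, …, m_k. Then reg(J) ≤ max{ max_{1 ≤ i ≤ k} ( reg( (J : m_i) + (m_1 : m_i) + ⋯ + (m_{i−1} : m_i) ) + d ), reg(I) }. -/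
open MvPolynomial

section aux
variable {V K : Type*} [Field K] {k : ℕ}

noncomputable def eps (K : Type*) [Field K] {k : ℕ} (t : Fin k) (T : Finset (Fin k)) : K :=
  (-1 : K) ^ (T.filter fun s => s < t).card

lemma eps_sq (t : Fin k) (T : Finset (Fin k)) : eps K t T * eps K t T = 1 := by
  unfold eps; rw [← pow_add, ← two_mul, pow_mul]; simp

lemma eps_erase (s t : Fin k) (T : Finset (Fin k)) (ht : t ∈ T) :
    eps K s T = eps K s (T.erase t) * (if t < s then -1 else 1) := by
  unfold eps
  rw [Finset.filter_erase]
  split_ifs with h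
  · rw [← Finset.card_erase_add_one (s := T.filter fun x => x < s) (a := t) (by simp [ht, h]),
      pow_succ]
  · rw [Finset.erase_eq_of_notMem (by simp [h]), mul_one]

lemma eps_swap (s t : Fin k) (T : Finset (Fin k)) (ht : t ∈ T) (hs : s ∈ T) (hst : s ≠ t) :
    eps K s T * eps K t (T.erase s) = - (eps K t T * eps K s (T.erase t)) := by
  rw [eps_erase s t T ht, eps_erase t s T hs]
  rcases lt_or_gt_of_ne hst with h | h
  · simp [h, h.not_gt]; ring
  · simp [h, h.not_gt]; ring

open Classical in
lemma diff_single (g : Fin k → (V →₀ ℕ)) (T : Finset (Fin k)) :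
    taylorDiff (K := K) g (Finsupp.single T 1) =
    ∑ t ∈ T, if taylorLcm g (T.erase t) = taylorLcm g T then
      eps K t T • Finsupp.single (T.erase t) (1 : K) else 0 := by
  simp [taylorDiff, taylorBoundary, eps]

lemma lcm_mono (g : Fin k → (V →₀ ℕ)) {S T : Finset (Fin k)} (h : S ⊆ T) :
    taylorLcm g S ≤ taylorLcm g T := Finset.sup_mono h

lemma lcm_insert (g : Fin k → (V →₀ ℕ)) (s) (T : Finset (Fin k)) :
    taylorLcm g (insert s T) = g s ⊔ taylorLcm g T := Finset.sup_insert

open Classical in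
lemma diff_diff (g : Fin k → (V →₀ ℕ)) (f : Finset (Fin k) →₀ K) :
    taylorDiff g (taylorDiff g f) = 0 := by
  suffices h : (taylorDiff (K := K) g) ∘ₗ (taylorDiff g) = 0 from
    congrArg (fun l => l f) h
  ext1 T
  ext1
  simp only [LinearMap.comp_apply, Finsupp.lsingle_apply, LinearMap.zero_apply]
  rw [diff_single, map_sum]
  have : ∀ t ∈ T, taylorDiff (K := K) g (if taylorLcm g (T.erase t) = taylorLcm g T then
      eps K t T • Finsupp.single (T.erase t) (1 : K) else 0) =
      ∑ s ∈ T.erase t, if taylorLcm g ((T.erase t).erase s) = taylorLcm g T then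
        (eps K t T * eps K s (T.erase t)) • Finsupp.single ((T.erase t).erase s) (1 : K) else 0 := by
    intro t ht
    split_ifs with h
    · rw [map_smul, diff_single, Finset.smul_sum]
      refine Finset.sum_congr rfl fun s hs => ?_
      rw [h]
      split_ifs
      · rw [smul_smul]
      · simp
    · rw [map_zero]
      refine (Finset.sum_eq_zero fun s hs => ?_).symm
      rw [if_neg]
      intro h2
      apply h
      apply le_antisymm (lcm_mono g (Finset.erase_subset _ _))
      rw [← h2]
      exact lcm_mono g (Finset.erase_subset _ _)
  rw [Finset.sum_congr rfl this, Finset.sum_sigma']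
  refine Finset.sum_involution (fun x _ => ⟨x.2, x.1⟩) ?_ ?_ ?_ ?_
  · rintro ⟨t, s⟩ h
    simp only [Finset.mem_sigma, Finset.mem_erase] at h
    obtain ⟨ht, hst, hs⟩ := h
    simp only
    rw [Finset.erase_right_comm (a := s) (b := t)]
    split_ifs
    · rw [← add_smul, eps_swap s t T ht hs hst]; simp
    · simp
  · rintro ⟨t, s⟩ h _ he
    simp only [Finset.mem_sigma, Finset.mem_erase] at h
    simp only [Sigma.mk.injEq] at he
    exact h.2.1 he.1
  · rintro ⟨t, s⟩ h
    simp only [Finset.mem_sigma, Finset.mem_erase] at h ⊢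
    exact ⟨h.2.2, h.2.1.symm, h.1⟩
  · rintro ⟨t, s⟩ h; rfl

lemma piece_eq (g : Fin k → (V →₀ ℕ)) (i j : ℕ) :
    taylorPiece (K := K) g i j =
      Finsupp.supported K K {T | T.card = i ∧ monomialDegree (taylorLcm g T) = j} := by
  rw [Finsupp.supported_eq_span_single]
  unfold taylorPiece
  congr 1
  ext f
  simp only [Set.mem_ofPred_eq, Set.mem_image]
  constructor
  · rintro ⟨T, h1, h2, h3⟩; exact ⟨T, ⟨h1, h2⟩, h3.symm⟩
  · rintro ⟨T, ⟨h1, h2⟩, h3⟩; exact ⟨T, h1, h2, h3.symm⟩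

lemma supported_map {α β : Type*} (S : Set α) (N : Submodule K (β →₀ K))
    (L : (α →₀ K) →ₗ[K] (β →₀ K)) (h : ∀ T ∈ S, L (Finsupp.single T 1) ∈ N)
    (f : α →₀ K) (hf : f ∈ Finsupp.supported K K S) : L f ∈ N := by
  rw [Finsupp.supported_eq_span_single] at hf
  have : Submodule.span K ((fun i => Finsupp.single i (1:K)) '' S) ≤ N.comap L := by
    rw [Submodule.span_le]
    rintro _ ⟨T, hT, rfl⟩
    exact h T hT
  exact this hf

lemma diff_piece (g : Fin k → (V →₀ ℕ)) (i j : ℕ) (f) (hf : f ∈ taylorPiece (K := K) g (i+1) j) :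
    taylorDiff g f ∈ taylorPiece (K := K) g i j := by
  rw [piece_eq] at hf ⊢
  refine supported_map _ _ _ ?_ f hf
  rintro T ⟨h1, h2⟩
  rw [diff_single]
  refine Submodule.sum_mem _ fun t ht => ?_
  split_ifs with h
  · refine Submodule.smul_mem _ _ (Finsupp.single_mem_supported _ _ ?_)
    refine ⟨by rw [Finset.card_erase_of_mem ht, h1]; rfl, by rw [h, h2]⟩
  · exact Submodule.zero_mem _

/-- homotopy -/
noncomputable def hmt (K : Type*) [Field K] {k : ℕ} (p s : Fin k) :
    (Finset (Fin k) →₀ K) →ₗ[K] (Finset (Fin k) →₀ K) :=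
  Finsupp.lsum K fun T => LinearMap.toSpanSingleton K (Finset (Fin k) →₀ K)
    (if p ∈ T ∧ s ∉ T then eps K s T • Finsupp.single (insert s T) (1 : K) else 0)

lemma hmt_single (p s : Fin k) (T : Finset (Fin k)) :
    hmt K p s (Finsupp.single T 1) =
     if p ∈ T ∧ s ∉ T then eps K s T • Finsupp.single (insert s T) (1 : K) else 0 := by
  simp [hmt]

lemma hmt_piece (g : Fin k → (V →₀ ℕ)) (p s : Fin k) (hps : g s ≤ g p) (i j : ℕ) (f)
    (hf : f ∈ taylorPiece (K := K) g i j) :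
    hmt K p s f ∈ taylorPiece (K := K) g (i+1) j := by
  rw [piece_eq] at hf ⊢
  refine supported_map _ _ _ ?_ f hf
  rintro T ⟨h1, h2⟩
  rw [hmt_single]
  split_ifs with h
  · refine Submodule.smul_mem _ _ (Finsupp.single_mem_supported _ _ ?_)
    refine ⟨by rw [Finset.card_insert_of_notMem h.2, h1], ?_⟩
    rw [lcm_insert, sup_eq_right.2, h2]
    exact hps.trans (Finset.le_sup (f := g) h.1)
  · exact Submodule.zero_mem _

open Classical in
lemma hmt_key (g : Fin k → (V →₀ ℕ)) (p s : Fin k) (hps : g s ≤ g p) (hne : s ≠ p)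
    (D : Finset (Fin k)) (hs : s ∉ D) (T : Finset (Fin k)) (hT : ∀ x ∈ T, x ∉ D) :
    Finsupp.single T (1:K) - taylorDiff g (hmt K p s (Finsupp.single T 1))
      - hmt K p s (taylorDiff g (Finsupp.single T 1)) ∈
    Finsupp.supported K K {T : Finset (Fin k) | ∀ x ∈ T, x ∉ insert p D} := by
  set N := Finsupp.supported K K {T : Finset (Fin k) | ∀ x ∈ T, x ∉ insert p D} with hN
  by_cases hp : p ∈ T
  swap
  · rw [hmt_single, if_neg (by tauto), map_zero, sub_zero, diff_single, map_sum,
      Finset.sum_eq_zero, sub_zero]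
    · refine Finsupp.single_mem_supported _ _ ?_
      intro x hx
      simp only [Finset.mem_insert, not_or]
      exact ⟨fun h => hp (h ▸ hx), hT x hx⟩
    · intro t ht
      split_ifs
      · rw [map_smul, hmt_single, if_neg, smul_zero]
        simp [hp]
      · simp
  by_cases hsT : s ∈ T
  · rw [hmt_single, if_neg (by tauto), map_zero, sub_zero, diff_single, map_sum,
      Finset.sum_eq_single s]
    · have hl : taylorLcm g (T.erase s) = taylorLcm g T := by
        conv_rhs => rw [← Finset.insert_erase hsT, lcm_insert]
        rw [sup_eq_right.2]
        exact hps.trans (Finset.le_sup (f := g) (Finset.mem_erase.2 ⟨hne.symm, hp⟩))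
      rw [if_pos hl, map_smul, hmt_single, if_pos (by simp [hp, hne.symm]), smul_smul,
        Finset.insert_erase hsT]
      have := eps_erase (K := K) s s T hsT
      simp only [lt_irrefl, if_false, mul_one] at this
      rw [← this, eps_sq, one_smul, sub_self]
      exact Submodule.zero_mem _
    · intro t ht hts
      split_ifs
      · rw [map_smul, hmt_single, if_neg, smul_zero]
        simp [hsT, hts.symm]
      · simp
    · intro h; exact absurd hsT h
  · have hlT : taylorLcm g (insert s T) = taylorLcm g T := by
      rw [lcm_insert, sup_eq_right.2]
      exact hps.trans (Finset.le_sup (f := g) hp)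
    have e1 := eps_erase (K := K) s s (insert s T) (Finset.mem_insert_self _ _)
    simp only [lt_irrefl, if_false, mul_one, Finset.erase_insert hsT] at e1
    rw [hmt_single, if_pos ⟨hp, hsT⟩, map_smul, diff_single, Finset.sum_insert hsT,
      Finset.erase_insert hsT, if_pos hlT.symm, smul_add, smul_smul, e1, eps_sq, one_smul,
      diff_single, map_sum, Finset.smul_sum, sub_add_cancel_left, ← neg_add', ← Finset.sum_add_distrib]
    refine Submodule.neg_mem _ (Submodule.sum_mem _ fun t ht => ?_)
    have hts : s ≠ t := fun h => hsT (h ▸ ht)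
    have hee : (insert s T).erase t = insert s (T.erase t) := by
      rw [Finset.erase_insert_of_ne hts]
    by_cases htp : t = p
    · subst htp
      have : hmt K t s (if taylorLcm g (T.erase t) = taylorLcm g T then
        eps K t T • Finsupp.single (T.erase t) (1 : K) else 0) = 0 := by
        split_ifs
        · rw [map_smul, hmt_single, if_neg (by simp), smul_zero]
        · simp
      rw [this, add_zero]
      refine Submodule.smul_mem _ _ ?_
      split_ifs
      · refine Submodule.smul_mem _ _ (Finsupp.single_mem_supported _ _ ?_)
        rw [hee]
        intro x hx
        simp only [Finset.mem_insert, Finset.mem_erase, not_or] at hx ⊢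
        rcases hx with rfl | ⟨h1, h2⟩
        · exact ⟨hne, hs⟩
        · exact ⟨h1, hT x h2⟩
      · exact Submodule.zero_mem _
    · have hl2 : taylorLcm g (insert s (T.erase t)) = taylorLcm g (T.erase t) := by
        rw [lcm_insert, sup_eq_right.2]
        exact hps.trans (Finset.le_sup (f := g) (Finset.mem_erase.2 ⟨fun h => htp h.symm, hp⟩))
      rw [hee, hl2, hlT]
      split_ifs with h
      · rw [map_smul, hmt_single, if_pos (by simp [hp, hsT, Ne.symm htp]), smul_smul, smul_smul,
          ← add_smul]
        have := eps_swap (K := K) s t (insert s T) (by simp [ht]) (by simp) hts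
        rw [Finset.erase_insert hsT, hee, e1] at this
        have e3 := eps_erase (K := K) s s (insert s (T.erase t)) (Finset.mem_insert_self _ _)
        simp only [lt_irrefl, if_false, mul_one,
          Finset.erase_insert (s := T.erase t) (a := s) (by simp [hsT])] at e3
        rw [e3] at this
        have e4 := eps_sq (K := K) s T
        have e5 := eps_sq (K := K) s (T.erase t)
        set a := eps K s T
        set b := eps K t T
        set c := eps K t (insert s T)
        set e := eps K s (T.erase t)
        have : a * c + b * e = 0 := by
          have h1 : b = - (a * c * e) := by
            linear_combination a * this - b * e4
          rw [h1]; linear_combination - a * c * e5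
        rw [this, zero_smul]; exact Submodule.zero_mem _
      · simp

lemma reduce (g : Fin k → (V →₀ ℕ)) (A : Set (Fin k))
    (hA : ∀ p ∉ A, ∃ s ∈ A, g s ≤ g p) (i j : ℕ)
    (f : Finset (Fin k) →₀ K) (hf : taylorDiff g f = 0) (hfp : f ∈ taylorPiece (K := K) g i j)
    (D : Finset (Fin k)) (hD : ∀ x ∈ D, x ∉ A) :
    ∃ f' : Finset (Fin k) →₀ K, taylorDiff g f' = 0 ∧ f' ∈ taylorPiece (K := K) g i j ∧
      f' ∈ Finsupp.supported K K {T : Finset (Fin k) | ∀ x ∈ T, x ∉ D} ∧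
      ∃ u ∈ taylorPiece (K := K) g (i+1) j, f = f' + taylorDiff g u := by
  induction D using Finset.induction_on with
  | empty =>
    refine ⟨f, hf, hfp, ?_, 0, Submodule.zero_mem _, by simp⟩
    simp
  | insert p D hp ih =>
    obtain ⟨f', h1, h2, h3, u, hu, h4⟩ := ih fun x hx => hD x (Finset.mem_insert_of_mem hx)
    obtain ⟨s, hsA, hs⟩ := hA p (hD p (Finset.mem_insert_self _ _))
    have hsD : s ∉ insert p D := fun h => hD s h hsA
    have hh := hmt_piece g p s hs i j f' h2
    refine ⟨f' - taylorDiff g (hmt K p s f'), ?_, ?_, ?_, u + hmt K p s f', ?_, ?_⟩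
    · rw [map_sub, h1, diff_diff, sub_zero]
    · exact Submodule.sub_mem _ h2 (diff_piece g i j _ hh)
    · have := supported_map (K := K) _
        (Finsupp.supported K K {T : Finset (Fin k) | ∀ x ∈ T, x ∉ insert p D})
        (LinearMap.id - taylorDiff g ∘ₗ hmt K p s - hmt K p s ∘ₗ taylorDiff g)
        (fun T hT => hmt_key g p s hs (by rintro rfl; simp at hsD) D
          (by simp at hsD; tauto) T hT) f' h3
      simpa [h1] using this
    · exact Submodule.add_mem _ hu hh
    · rw [h4, map_add]; abel

lemma deg_mono {a b : V →₀ ℕ} (h : a ≤ b) : monomialDegree a ≤ monomialDegree b := by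
  obtain ⟨c, rfl⟩ := exists_add_of_le h
  unfold monomialDegree
  rw [Finsupp.sum_add_index' (by simp) (by simp)]
  omega

lemma deg_add (a b : V →₀ ℕ) : monomialDegree (a + b) = monomialDegree a + monomialDegree b := by
  unfold monomialDegree
  rw [Finsupp.sum_add_index' (by simp) (by simp)]

open Classical in
lemma mem_mspan (g : Fin k → (V →₀ ℕ)) (a : V →₀ ℕ) :
    monomial a (1:K) ∈ monomialSpan (K := K) g ↔ ∃ t, g t ≤ a := by
  unfold monomialSpan
  rw [show (Set.range fun i => monomial (g i) (1:K)) =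
    (fun s => monomial s (1:K)) '' (Set.range g) by rw [← Set.range_comp]; rfl]
  rw [mem_ideal_span_monomial_image]
  rw [MvPolynomial.support_monomial, if_neg one_ne_zero]
  simp

lemma reg_bdd (m : Fin k → (V →₀ ℕ)) :
    BddAbove { d | ∃ i j : ℕ, IdealTorNonzero (monomialSpan (K := K) m) i j ∧ d = j - i } := by
  refine ⟨monomialDegree (Finset.univ.sup m), ?_⟩
  rintro _ ⟨i, j, ⟨k', g, hg, hn⟩, rfl⟩
  refine (Nat.sub_le _ _).trans ?_
  by_contra hlt
  apply hn
  rintro f ⟨hf1, hf2⟩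
  classical
  let A : Set (Fin k') := {t | g t ≤ Finset.univ.sup m}
  have hA : ∀ p ∉ A, ∃ s ∈ A, g s ≤ g p := by
    intro p _
    obtain ⟨t, ht⟩ := (mem_mspan (K := K) m (g p)).1 (by rw [hg, mem_mspan]; exact ⟨p, le_rfl⟩)
    obtain ⟨s, hs⟩ := (mem_mspan (K := K) g (m t)).1 (by rw [← hg, mem_mspan]; exact ⟨t, le_rfl⟩)
    exact ⟨s, hs.trans (Finset.le_sup (Finset.mem_univ _)), hs.trans ht⟩
  obtain ⟨f', h1, h2, h3, u, hu, h4⟩ := reduce g A hA (i+1) j f hf1 hf2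
    (Finset.univ.filter fun x => x ∉ A) (by simp)
  have : f' = 0 := by
    ext T
    by_contra hT
    rw [piece_eq, Finsupp.mem_supported] at h2
    rw [Finsupp.mem_supported] at h3
    have hT' : T ∈ f'.support := Finsupp.mem_support_iff.2 hT
    have a1 := (h2 hT').2
    have a2 := h3 hT'
    simp only [Set.mem_ofPred_eq, Finset.mem_filter, Finset.mem_univ, true_and, not_not] at a2
    apply hlt
    rw [← a1]
    exact deg_mono (Finset.sup_le a2)
  exact ⟨u, hu, by rw [h4, this, zero_add]⟩

lemma le_reg (m : Fin k → (V →₀ ℕ)) {i j : ℕ} (h : IdealTorNonzero (monomialSpan (K := K) m) i j) :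
    j - i ≤ reg (monomialSpan (K := K) m) := le_csSup (reg_bdd m) ⟨i, j, h, rfl⟩

def iT (T : Finset (Fin k)) : Finset (Fin (k+1)) := T.map Fin.castSuccEmb
def lT (T : Finset (Fin k)) : Finset (Fin (k+1)) := insert (Fin.last k) (T.map Fin.castSuccEmb)

lemma last_notMem (T : Finset (Fin k)) : Fin.last k ∉ T.map Fin.castSuccEmb := by
  simp [Fin.castSucc_ne_last]

lemma iT_inj : Function.Injective (iT (k := k)) := Finset.map_injective _

lemma lT_inj : Function.Injective (lT (k := k)) := by
  intro S T h
  apply iT_inj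
  have := congrArg (fun X => X.erase (Fin.last k)) h
  simp only [lT, Finset.erase_insert (last_notMem _)] at this
  exact this

lemma iT_ne_lT (S T : Finset (Fin k)) : iT S ≠ lT T := by
  intro h
  apply last_notMem S
  have : Fin.last k ∈ lT T := Finset.mem_insert_self _ _
  rwa [← h] at this

lemma T_cases (T : Finset (Fin (k+1))) : (∃ S, T = iT S) ∨ ∃ S, T = lT S := by
  by_cases h : Fin.last k ∈ T
  · right
    refine ⟨Finset.univ.filter fun x => x.castSucc ∈ T, ?_⟩
    ext x
    refine Fin.lastCases ?_ (fun y => ?_) x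
    · simp [lT, h]
    · simp [lT, Fin.castSucc_ne_last]
  · left
    refine ⟨Finset.univ.filter fun x => x.castSucc ∈ T, ?_⟩
    ext x
    refine Fin.lastCases ?_ (fun y => ?_) x
    · simp [iT, h, Fin.castSucc_ne_last]
    · simp [iT]

noncomputable def iL (K : Type*) [Field K] {k : ℕ} :
    (Finset (Fin k) →₀ K) →ₗ[K] (Finset (Fin (k+1)) →₀ K) := Finsupp.lmapDomain K K iT
noncomputable def lL (K : Type*) [Field K] {k : ℕ} :
    (Finset (Fin k) →₀ K) →ₗ[K] (Finset (Fin (k+1)) →₀ K) := Finsupp.lmapDomain K K lT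

lemma iL_single (T : Finset (Fin k)) : iL K (Finsupp.single T 1) = Finsupp.single (iT T) 1 := by
  simp [iL]
lemma lL_single (T : Finset (Fin k)) : lL K (Finsupp.single T 1) = Finsupp.single (lT T) 1 := by
  simp [lL]

lemma comb_i (a b : Finset (Fin k) →₀ K) (T : Finset (Fin k)) : (iL K a + lL K b) (iT T) = a T := by
  rw [Finsupp.add_apply]
  simp only [iL, lL, Finsupp.lmapDomain_apply]
  rw [Finsupp.mapDomain_apply iT_inj, Finsupp.mapDomain_of_notMem_range, add_zero]
  rintro ⟨S, hS⟩; exact iT_ne_lT _ _ hS.symm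

lemma comb_l (a b : Finset (Fin k) →₀ K) (T : Finset (Fin k)) : (iL K a + lL K b) (lT T) = b T := by
  rw [Finsupp.add_apply]
  simp only [iL, lL, Finsupp.lmapDomain_apply]
  rw [Finsupp.mapDomain_apply lT_inj, Finsupp.mapDomain_of_notMem_range, zero_add]
  rintro ⟨S, hS⟩; exact iT_ne_lT _ _ hS

lemma comb_inj (a b a' b' : Finset (Fin k) →₀ K) (h : iL K a + lL K b = iL K a' + lL K b') :
    a = a' ∧ b = b' := by
  constructor
  · ext T; rw [← comb_i a b, h, comb_i]
  · ext T; rw [← comb_l a b, h, comb_l]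

lemma comb_ex (u : Finset (Fin (k+1)) →₀ K) : ∃ a b, u = iL K a + lL K b := by
  refine ⟨Finsupp.comapDomain iT u iT_inj.injOn, Finsupp.comapDomain lT u lT_inj.injOn, ?_⟩
  ext T
  rcases T_cases T with ⟨S, rfl⟩ | ⟨S, rfl⟩
  · rw [comb_i]; rfl
  · rw [comb_l]; rfl

/-- extended family -/
def ext1 (g : Fin k → (V →₀ ℕ)) (n : V →₀ ℕ) : Fin (k+1) → (V →₀ ℕ) :=
  Fin.snoc (α := fun _ => V →₀ ℕ) g n

/-- colon family -/
noncomputable def colg (g : Fin k → (V →₀ ℕ)) (n : V →₀ ℕ) : Fin k → (V →₀ ℕ) := fun t => g t - n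

variable (g : Fin k → (V →₀ ℕ)) (n : V →₀ ℕ)

lemma lcm_iT (T : Finset (Fin k)) : taylorLcm (ext1 g n) (iT T) = taylorLcm g T := by
  unfold taylorLcm iT
  rw [Finset.sup_map]
  congr 1
  ext1 t
  simp [ext1]

lemma lcm_col (T : Finset (Fin k)) : taylorLcm (colg g n) T = taylorLcm g T - n := by
  induction T using Finset.induction_on with
  | empty => ext v; simp [taylorLcm, show (⊥ : V →₀ ℕ) = 0 from rfl]
  | insert s T hs ih =>
    rw [lcm_insert, lcm_insert, ih]
    ext v
    simp only [colg, Finsupp.sup_apply, Finsupp.tsub_apply]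
    omega

lemma lcm_lT (T : Finset (Fin k)) : taylorLcm (ext1 g n) (lT T) = n + taylorLcm (colg g n) T := by
  have h : taylorLcm (ext1 g n) (lT T) = n ⊔ taylorLcm g T := by
    rw [← lcm_iT g n T]
    unfold lT
    rw [lcm_insert]
    congr 1
    simp [ext1]
  rw [h, lcm_col]
  ext v
  simp only [Finsupp.sup_apply, Finsupp.tsub_apply, Finsupp.add_apply]
  omega

lemma eps_iT (t : Fin k) (T : Finset (Fin k)) : eps K t.castSucc (iT T) = eps K t T := by
  unfold eps iT
  rw [Finset.filter_map, Finset.card_map]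
  simp [Function.comp_def]

lemma eps_lT (t : Fin k) (T : Finset (Fin k)) : eps K t.castSucc (lT T) = eps K t T := by
  rw [← eps_iT t T]
  unfold eps lT iT
  rw [Finset.filter_insert, if_neg (by simp [Fin.le_last])]

lemma erase_iT (t : Fin k) (T : Finset (Fin k)) : (iT T).erase t.castSucc = iT (T.erase t) := by
  unfold iT
  rw [Finset.map_erase]; rfl

lemma erase_lT (t : Fin k) (T : Finset (Fin k)) : (lT T).erase t.castSucc = lT (T.erase t) := by
  have := erase_iT t T
  unfold lT
  rw [Finset.erase_insert_of_ne (Fin.castSucc_ne_last t).symm]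
  unfold iT at this
  rw [this]

open Classical in
noncomputable def phi (K : Type*) [Field K] : (Finset (Fin k) →₀ K) →ₗ[K] (Finset (Fin k) →₀ K) :=
  Finsupp.lsum K fun T => LinearMap.toSpanSingleton K (Finset (Fin k) →₀ K)
    (if taylorLcm g T = n + taylorLcm (colg g n) T then
      eps K (Fin.last k) (lT T) • Finsupp.single T (1 : K) else 0)

open Classical in
lemma phi_single (T : Finset (Fin k)) : phi g n K (Finsupp.single T 1) =
    if taylorLcm g T = n + taylorLcm (colg g n) T then
      eps K (Fin.last k) (lT T) • Finsupp.single T (1 : K) else 0 := by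
  simp [phi]

open Classical in
lemma diff_iL (f : Finset (Fin k) →₀ K) :
    taylorDiff (ext1 g n) (iL K f) = iL K (taylorDiff g f) := by
  suffices h : (taylorDiff (K := K) (ext1 g n)) ∘ₗ (iL K) = iL K ∘ₗ taylorDiff g from
    congrArg (fun l => l f) h
  refine Finsupp.lhom_ext' fun T => LinearMap.ext_ring ?_
  simp only [LinearMap.comp_apply, Finsupp.lsingle_apply]
  rw [iL_single, diff_single, diff_single, map_sum]
  rw [show ∀ F : Fin (k+1) → (Finset (Fin (k+1)) →₀ K), ∑ t ∈ iT T, F t = ∑ t ∈ T, F t.castSucc from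
    fun F => Finset.sum_map _ _ _]
  refine Finset.sum_congr rfl fun t ht => ?_
  rw [erase_iT, lcm_iT, lcm_iT, eps_iT]
  split_ifs
  · rw [map_smul, iL_single]
  · simp

open Classical in
lemma diff_lL (f : Finset (Fin k) →₀ K) :
    taylorDiff (ext1 g n) (lL K f) = iL K (phi g n K f) + lL K (taylorDiff (colg g n) f) := by
  suffices h : (taylorDiff (K := K) (ext1 g n)) ∘ₗ (lL K) =
      iL K ∘ₗ phi g n K + lL K ∘ₗ taylorDiff (colg g n) from
    congrArg (fun l => l f) h
  refine Finsupp.lhom_ext' fun T => LinearMap.ext_ring ?_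
  simp only [LinearMap.comp_apply, Finsupp.lsingle_apply, LinearMap.add_apply]
  rw [lL_single, diff_single, diff_single, map_sum, phi_single]
  rw [show ∀ F : Fin (k+1) → (Finset (Fin (k+1)) →₀ K), ∑ t ∈ lT T, F t =
    F (Fin.last k) + ∑ t ∈ T, F t.castSucc from
    fun F => by unfold lT; rw [Finset.sum_insert (last_notMem _), Finset.sum_map]; rfl]
  congr 1
  · rw [show (lT T).erase (Fin.last k) = iT T from Finset.erase_insert (last_notMem _), lcm_iT,
      lcm_lT]
    split_ifs
    · rw [map_smul, iL_single]
    · simp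
  · refine Finset.sum_congr rfl fun t ht => ?_
    rw [erase_lT, lcm_lT, lcm_lT, eps_lT]
    simp only [add_right_inj]
    split_ifs
    · rw [map_smul, lL_single]
    · simp

lemma les (i j : ℕ) (h : taylorHomologyNonzero (K := K) g i j) :
    taylorHomologyNonzero (K := K) (ext1 g n) i j ∨
    (monomialDegree n ≤ j ∧
      taylorHomologyNonzero (K := K) (colg g n) i (j - monomialDegree n)) := by
  by_contra hcon
  rw [not_or] at hcon
  obtain ⟨h1, h2⟩ := hcon
  unfold taylorHomologyNonzero at h1
  rw [not_not] at h1
  apply h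
  rintro f ⟨hf1, hf2⟩
  rw [SetLike.mem_coe, LinearMap.mem_ker] at hf1
  rw [SetLike.mem_coe] at hf2
  have hif : iL K f ∈ taylorPiece (K := K) (ext1 g n) i j := by
    rw [piece_eq] at hf2 ⊢
    refine supported_map _ _ _ ?_ f hf2
    rintro T ⟨a1, a2⟩
    rw [iL_single]
    refine Finsupp.single_mem_supported _ _ ⟨?_, ?_⟩
    · rw [iT, Finset.card_map, a1]
    · rw [lcm_iT, a2]
  obtain ⟨u, hu, hfu⟩ := h1 ⟨by
    rw [SetLike.mem_coe, LinearMap.mem_ker, diff_iL, hf1, map_zero], hif⟩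
  obtain ⟨a, b, rfl⟩ := comb_ex u
  rw [SetLike.mem_coe, piece_eq, Finsupp.mem_supported] at hu
  have ha : a ∈ taylorPiece (K := K) g (i+1) j := by
    rw [piece_eq, Finsupp.mem_supported]
    intro T hT
    have : iT T ∈ (iL K a + lL K b).support := by
      rw [Finsupp.mem_support_iff, comb_i]; simpa using hT
    have := hu this
    simp only [Set.mem_ofPred_eq, lcm_iT] at this
    rwa [iT, Finset.card_map] at this
  have hb : ∀ T, b T ≠ 0 → T.card = i ∧
      monomialDegree n + monomialDegree (taylorLcm (colg g n) T) = j := by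
    intro T hT
    have : lT T ∈ (iL K a + lL K b).support := by
      rw [Finsupp.mem_support_iff, comb_l]; exact hT
    have := hu this
    simp only [Set.mem_ofPred_eq, lcm_lT, deg_add] at this
    rw [lT, Finset.card_insert_of_notMem (last_notMem _), Finset.card_map] at this
    exact ⟨by omega, this.2⟩
  rw [map_add, diff_iL, diff_lL, ← add_assoc, ← map_add] at hfu
  obtain ⟨e1, e2⟩ := comb_inj _ _ f 0 (by rw [hfu, map_zero, add_zero])
  by_cases hd : monomialDegree n ≤ j
  swap
  · have : b = 0 := by
      ext T
      by_contra hT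
      have := (hb T hT).2
      omega
    rw [this, map_zero, add_zero] at e1
    exact ⟨a, ha, e1⟩
  have h3 : ¬ taylorHomologyNonzero (K := K) (colg g n) i (j - monomialDegree n) :=
    fun h => h2 ⟨hd, h⟩
  unfold taylorHomologyNonzero at h3
  rw [not_not] at h3
  obtain ⟨w, hw, hwb⟩ := h3 (show b ∈ _ from ⟨e2, by
    rw [SetLike.mem_coe, piece_eq, Finsupp.mem_supported]
    intro T hT
    have := hb T (by simpa using hT)
    exact ⟨this.1, by omega⟩⟩)
  have dd := diff_diff (ext1 g n) (lL K w)
  rw [diff_lL, map_add, diff_iL, diff_lL, ← add_assoc, ← map_add, hwb] at dd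
  obtain ⟨e3, -⟩ := comb_inj _ _ (0 : Finset (Fin k) →₀ K) 0 (by rw [dd]; simp)
  refine ⟨a - phi g n K w, Submodule.sub_mem _ ha ?_, ?_⟩
  · rw [SetLike.mem_coe, piece_eq] at hw
    rw [piece_eq]
    refine supported_map _ _ _ ?_ w hw
    rintro T ⟨a1, a2⟩
    rw [phi_single]
    split_ifs with hc
    · refine Submodule.smul_mem _ _ (Finsupp.single_mem_supported _ _ ⟨a1, ?_⟩)
      rw [hc, deg_add, a2]; omega
    · exact Submodule.zero_mem _
  · rw [map_sub, ← e1, eq_neg_of_add_eq_zero_left e3]; abel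


noncomputable def sp (K : Type*) [Field K] (S : Set (V →₀ ℕ)) : Ideal (MvPolynomial V K) :=
  Ideal.span ((fun s => monomial s (1:K)) '' S)

lemma mspan_eq (g : Fin k → (V →₀ ℕ)) : monomialSpan (K := K) g = sp K (Set.range g) := by
  unfold monomialSpan sp
  rw [← Set.range_comp]; rfl

lemma sp_colon (S : Set (V →₀ ℕ)) (n : V →₀ ℕ) :
    Submodule.colon (sp K S) (Ideal.span {monomial n (1 : K)} : Ideal (MvPolynomial V K)) =
      sp K ((fun s => s - n) '' S) := by
  ext x
  rw [Ideal.mem_colon_span_singleton]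
  unfold sp
  rw [mem_ideal_span_monomial_image, mem_ideal_span_monomial_image]
  constructor
  · intro h y hy
    obtain ⟨s, hs, hsy⟩ := h (y + n) (by
      rw [mem_support_iff, coeff_mul_monomial, mul_one]; simpa using hy)
    exact ⟨_, ⟨s, hs, rfl⟩, tsub_le_iff_right.2 hsy⟩
  · intro h y hy
    rw [mem_support_iff, coeff_mul_monomial'] at hy
    split_ifs at hy with hn
    · obtain ⟨_, ⟨s, hs, rfl⟩, hsy⟩ := h (y - n) (by rw [mem_support_iff]; simpa using hy)
      refine ⟨s, hs, ?_⟩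
      have := tsub_le_iff_right.1 hsy
      rwa [tsub_add_cancel_of_le hn] at this
    · exact absurd rfl hy

lemma sp_union (S T : Set (V →₀ ℕ)) : sp K (S ∪ T) = sp K S ⊔ sp K T := by
  unfold sp
  rw [Set.image_union, Ideal.span_union]

lemma sp_iUnion {ι : Sort*} (S : ι → Set (V →₀ ℕ)) : sp K (⋃ i, S i) = ⨆ i, sp K (S i) := by
  unfold sp
  rw [Set.image_iUnion, Ideal.span_iUnion]

end aux

/-- If `J ⊆ I` are monomial ideals with `I` generated in degree `d` by
monomials `m_1, …, m_k`, then
`reg J ≤ max { max_i (reg((J : m_i) + (m_1 : m_i) + ⋯ + (m_{i-1} : m_i)) + d), reg I }`. -/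
theorem stmt15 {V K : Type*} [Field K]
    (k d : ℕ) (m : Fin k → (V →₀ ℕ)) (hdeg : ∀ i, monomialDegree (m i) = d)
    (I J : Ideal (MvPolynomial V K)) (hI : I = monomialSpan m)
    (hJ : ∃ (k' : ℕ) (gens : Fin k' → (V →₀ ℕ)), J = monomialSpan gens)
    (hJI : J ≤ I) :
    reg J ≤ max
      (⨆ i : Fin k, (reg (Submodule.colon J (Ideal.span {monomial (m i) (1 : K)}) ⊔
          ⨆ l : Fin k, ⨆ _ : (l : ℕ) < (i : ℕ),
            Submodule.colon (Ideal.span {(monomial (m l) (1 : K) : MvPolynomial V K)})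
              (Ideal.span {monomial (m i) (1 : K)})) + d))
      (reg I) := by
  obtain ⟨k', g, rfl⟩ := hJ
  subst hI
  set L : Fin k → Ideal (MvPolynomial V K) := fun i =>
    (Submodule.colon (monomialSpan g) (Ideal.span {monomial (m i) (1 : K)}) ⊔
          ⨆ l : Fin k, ⨆ _ : (l : ℕ) < (i : ℕ),
            Submodule.colon (Ideal.span {(monomial (m l) (1 : K) : MvPolynomial V K)})
              (Ideal.span {monomial (m i) (1 : K)})) with hL
  have hLeq : ∀ i, L i = sp K ((fun s => s - m i) ''
      (Set.range g ∪ ⋃ l : Fin k, ⋃ _ : (l : ℕ) < (i : ℕ), {m l})) := by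
    intro i
    have hs : ∀ l, (Ideal.span {(monomial (m l) (1 : K) : MvPolynomial V K)}) = sp K {m l} := by
      intro l; simp [sp]
    rw [Set.image_union, sp_union, Set.image_iUnion, sp_iUnion]
    simp only [Set.image_iUnion, sp_iUnion, ← sp_colon, ← hs, ← mspan_eq, hL]
  by_cases hne : { d | ∃ i j : ℕ, IdealTorNonzero (monomialSpan (K := K) g) i j ∧ d = j - i }.Nonempty
  swap
  · rw [Set.not_nonempty_iff_eq_empty] at hne
    have : reg (monomialSpan (K := K) g) = 0 := by unfold reg; rw [hne]; simp
    rw [this]; exact Nat.zero_le _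
  refine csSup_le hne ?_
  rintro _ ⟨i, j, ⟨k₁, g₁, hg₁, hH⟩, rfl⟩
  have main : ∀ r ≤ k, (∃ l, j - i ≤ reg (L l) + d) ∨
      ∃ (q : ℕ) (G : Fin q → (V →₀ ℕ)),
        sp K (Set.range G) = sp K (Set.range g ∪ ⋃ l : Fin k, ⋃ _ : (l : ℕ) < r, {m l}) ∧
        taylorHomologyNonzero (K := K) G (i + 1) j := by
    intro r
    induction r with
    | zero =>
      intro _
      refine Or.inr ⟨k₁, g₁, ?_, hH⟩
      simp [← mspan_eq, hg₁]
    | succ r ih =>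
      intro hr
      rcases ih (by omega) with h | ⟨q, G, hG, hGH⟩
      · exact Or.inl h
      let l : Fin k := ⟨r, hr⟩
      rcases les G (m l) (i+1) j hGH with h | ⟨hd, h⟩
      · refine Or.inr ⟨q+1, ext1 G (m l), ?_, h⟩
        have e1 : Set.range (ext1 G (m l)) = Set.range G ∪ {m l} := by
          unfold ext1
          rw [Fin.range_snoc, Set.insert_eq, Set.union_comm]
        have e2 : (⋃ l : Fin k, ⋃ _ : (l : ℕ) < r + 1, {m l}) =
            (⋃ l : Fin k, ⋃ _ : (l : ℕ) < r, {m l}) ∪ {m l} := by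
          ext x
          simp only [Set.mem_iUnion, Set.mem_singleton_iff, Set.mem_union, exists_prop]
          constructor
          · rintro ⟨a, ha, rfl⟩
            rcases Nat.lt_succ_iff_lt_or_eq.1 ha with h | h
            · exact Or.inl ⟨a, h, rfl⟩
            · right; congr 1; exact Fin.ext h
          · rintro (⟨a, ha, rfl⟩ | rfl)
            · exact ⟨a, by omega, rfl⟩
            · exact ⟨l, Nat.lt_succ_self r, rfl⟩
        rw [e1, e2, sp_union, hG, ← Set.union_assoc, sp_union (_ ∪ _) {m l}]
      · left
        refine ⟨l, ?_⟩
        have e : L l = monomialSpan (colg G (m l)) := by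
          rw [hLeq, ← sp_colon, mspan_eq]
          change Submodule.colon (sp K (Set.range g ∪ ⋃ l : Fin k, ⋃ _ : (l : ℕ) < r, {m l})) _ = _
          rw [← hG, sp_colon, ← Set.range_comp]
          rfl
        have := le_reg (K := K) (colg G (m l)) ⟨q, _, rfl, h⟩
        rw [hdeg] at this hd
        rw [e]
        omega
  rcases main k le_rfl with ⟨l, h⟩ | ⟨q, G, hG, hGH⟩
  · refine le_max_of_le_left (h.trans ?_)
    exact le_ciSup (f := fun i => reg (L i) + d) (Set.finite_range _).bddAbove l
  · refine le_max_of_le_right (le_reg m ⟨q, G, ?_, hGH⟩)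
    have : (⋃ l : Fin k, ⋃ _ : (l : ℕ) < k, {m l}) = Set.range m := by
      ext x; simp [eq_comm]
    rw [mspan_eq G, hG, this, sp_union, ← mspan_eq, ← mspan_eq, sup_eq_right.2 hJI]
end
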